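/- arXiv:2003.10523 — 3 statements merged into one kernel-verified Lean document; each statement's English description precedes it below -/
import Mathlib

section
/- The ReLU activation x ↦ max(x,0) restricted to [-1,1] is admissible with order of approximation φ_ReLU(ε) = O(1/ε), and the sigmoid activation x ↦ e^x/(1+e^x) restricted to [-1,1] is admissible with order of approximation φ_sigmoid(ε) = O(log(1/ε)). That is: each function is 1-Lipschitz on [-1,1] and bounded in absolute value by 1 there, and there is a constant C > 0 such that for every ε ∈ (0,1] there exists a real polynomial P of degree at most C/ε (respectively at most C·log(1/ε)) with sup_{x∈[-1,1]} |P(x) − σ(x)| ≤ ε and P([-1,1]) ⊆ [0,1]. -/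
open MeasureTheory Polynomial Matrix
open scoped Classical

noncomputable section

/-- One layer of a neural network: apply the weight matrix, then the activation
coordinatewise. -/
def applyLayer (σ : ℝ → ℝ) {m n : ℕ} (W : Matrix (Fin m) (Fin n) ℝ) (v : Fin n → ℝ) :
    Fin m → ℝ :=
  fun j => σ (∑ i, W j i * v i)

/-- Iterated application of `n` square hidden layers. -/
def iterLayers (σ : ℝ → ℝ) {m : ℕ} :
    (n : ℕ) → (Fin n → Matrix (Fin m) (Fin m) ℝ) → (Fin m → ℝ) → (Fin m → ℝ)
  | 0, _, v => v
  | n + 1, W, v => applyLayer σ (W (Fin.last n)) (iterLayers σ n (fun i => W i.castSucc) v)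

/-- Output of a neural network of depth `n+1` (one rectangular layer `W1` followed by
`n` square layers `Ws` and output weights `a`):
`f(W,x) = aᵀ σ(W_{n+1} σ( ⋯ σ(W_1 x) ⋯ ))`. -/
def nnFun (σ : ℝ → ℝ) {d m n : ℕ} (a : Fin m → ℝ)
    (W1 : Matrix (Fin m) (Fin d) ℝ) (Ws : Fin n → Matrix (Fin m) (Fin m) ℝ)
    (x : Fin d → ℝ) : ℝ :=
  ∑ j, a j * iterLayers σ n Ws (applyLayer σ W1 x) j

/-- The monomial `x_α = ∏ i, (x i) ^ (α i)`. -/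
def monom {d : ℕ} (α : Fin d → ℕ) (x : Fin d → ℝ) : ℝ := ∏ i, x i ^ α i

/-- Topological support of a measure on `ℝ`. -/
def measSupport (P : Measure ℝ) : Set ℝ := {x | ∀ U ∈ nhds x, P U ≠ 0}

/-- `ω(P,t) = min(|Support(P)| − 1, t)`, equal to `t` when the support is infinite. -/
def omegaP (P : Measure ℝ) (t : ℕ) : ℕ :=
  if (measSupport P).Finite then min ((measSupport P).ncard - 1) t else t

/-- `M' = min(M, d·(|Support(P)| − 1))`, equal to `M` when the support is infinite. -/
def capM (P : Measure ℝ) (d M : ℕ) : ℕ :=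
  if (measSupport P).Finite then min M (d * ((measSupport P).ncard - 1)) else M

/-- `F_{s,t}`: multi-indices `α ∈ ℕ^d` with all entries `≤ s` and total degree `t`. -/
def Fst (d s t : ℕ) : Finset (Fin d → ℕ) :=
  (Fintype.piFinset fun _ : Fin d => Finset.range (s + 1)).filter fun α => ∑ i, α i = t

/-- The `(d,M)`-multiplicities set `C = ∪_{t=0}^{M'} F_{ω(P,M),t}`. -/
def multSet (P : Measure ℝ) (d M : ℕ) : Finset (Fin d → ℕ) :=
  (Fintype.piFinset fun _ : Fin d => Finset.range (omegaP P M + 1)).filter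
    fun α => ∑ i, α i ≤ capM P d M

/-- `n`-th moment `c_n = E[X^n]` of `P`. -/
def momentP (P : Measure ℝ) (n : ℕ) : ℝ := ∫ x, x ^ n ∂P

/-- Hankel determinant `D_n = det((c_{i+j})_{0 ≤ i,j ≤ n})` of moments of `P`. -/
def Dn (P : Measure ℝ) (n : ℕ) : ℝ :=
  Matrix.det (Matrix.of fun i j : Fin (n + 1) => momentP P ((i : ℕ) + (j : ℕ)))

/-- `c(P,k) = min(min_{1 ≤ i ≤ ω(P,k)} (D_i/D_{i−1})^{k/2}, 1)`. -/
def cPk (P : Measure ℝ) (k : ℕ) : ℝ :=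
  sInf (insert (1 : ℝ)
    ((fun i => (Dn P i / Dn P (i - 1)) ^ ((k : ℝ) / 2)) '' Set.Icc 1 (omegaP P k)))

/-- `max(max_{1 ≤ i ≤ ω(P,k)} (D_i/D_{i−1})^{k/2}, 1)`. -/
def cPkMax (P : Measure ℝ) (k : ℕ) : ℝ :=
  sSup (insert (1 : ℝ)
    ((fun i => (Dn P i / Dn P (i - 1)) ^ ((k : ℝ) / 2)) '' Set.Icc 1 (omegaP P k)))

/-- `max(max_{1 ≤ i ≤ ω(P,k)} (D_i/D_{i−1})^k, 1)`. -/
def ratioMaxK (P : Measure ℝ) (k : ℕ) : ℝ :=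
  sSup (insert (1 : ℝ)
    ((fun i => (Dn P i / Dn P (i - 1)) ^ k) '' Set.Icc 1 (omegaP P k)))

/-- `min(min_{1 ≤ i ≤ ω(P,k)} (D_i/D_{i−1})^k, 1)`. -/
def ratioMinK (P : Measure ℝ) (k : ℕ) : ℝ :=
  sInf (insert (1 : ℝ)
    ((fun i => (Dn P i / Dn P (i - 1)) ^ k) '' Set.Icc 1 (omegaP P k)))

/-- `f(P,k) = max(c_{2ω(P,k)}^k, 1) · max(max_i (D_i/D_{i−1})^k, 1) / min(min_i (D_i/D_{i−1})^k, 1)`. -/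
def fPk (P : Measure ℝ) (k : ℕ) : ℝ :=
  max (momentP P (2 * omegaP P k) ^ k) 1 * ratioMaxK P k / ratioMinK P k

/-- `C(P,k) = f(P,k)/c(P,k)`. -/
def CPk (P : Measure ℝ) (k : ℕ) : ℝ := fPk P k / cPk P k

/-- An admissible distribution: a non-constant probability measure supported in `[-1,1]`. -/
def AdmissibleDist (P : Measure ℝ) : Prop :=
  IsProbabilityMeasure P ∧ P (Set.Icc (-1 : ℝ) 1) = 1 ∧ ∀ c : ℝ, P {c} < 1

/-- The product measure `P^{⊗d}` on `ℝ^d`. -/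
def piP (P : Measure ℝ) (d : ℕ) : Measure (Fin d → ℝ) := Measure.pi fun _ => P

/-- The joint law of `N` i.i.d. samples from `P^{⊗d}`. -/
def samples (P : Measure ℝ) (d N : ℕ) : Measure (Fin N → Fin d → ℝ) :=
  Measure.pi fun _ => piP P d

/-- Order of polynomial approximation of `σ` on `[-1,1]`: the least degree `r` for which
some real polynomial of degree `r` is uniformly within `ε` of `σ` on `[-1,1]`. -/
def approxOrder (σ : ℝ → ℝ) (ε : ℝ) : ℕ :=
  sInf {r : ℕ | ∃ p : Polynomial ℝ, p.natDegree = r ∧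
    ∀ x ∈ Set.Icc (-1 : ℝ) 1, |p.eval x - σ x| ≤ ε}

/-- An admissible activation function. -/
def AdmissibleActivation (σ : ℝ → ℝ) : Prop :=
  (∀ ε : ℝ, 0 < ε → ∃ p : Polynomial ℝ,
      ∀ x ∈ Set.Icc (-1 : ℝ) 1, |p.eval x - σ x| ≤ ε) ∧
  (∀ ε : ℝ, 0 < ε → ∃ p : Polynomial ℝ, p.natDegree = approxOrder σ ε ∧
      (∀ x ∈ Set.Icc (-1 : ℝ) 1, |p.eval x - σ x| ≤ ε) ∧
      ∀ x ∈ Set.Icc (-1 : ℝ) 1, p.eval x ∈ Set.Icc (0 : ℝ) 1) ∧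
  LipschitzOnWith 1 σ (Set.Icc (-1) 1) ∧
  ∀ x ∈ Set.Icc (-1 : ℝ) 1, |σ x| ≤ 1

/-- Quadratic form `vᵀ A v`. -/
def quadForm {n : Type*} [Fintype n] (A : Matrix n n ℝ) (v : n → ℝ) : ℝ :=
  ∑ i, ∑ j, v i * A i j * v j

/-- Smallest eigenvalue of a symmetric matrix (Rayleigh characterization). -/
def lamMin {n : Type*} [Fintype n] (A : Matrix n n ℝ) : ℝ :=
  sInf {r : ℝ | ∃ v : n → ℝ, ∑ i, v i ^ 2 = 1 ∧ r = quadForm A v}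

/-- Largest eigenvalue of a symmetric matrix (Rayleigh characterization). -/
def lamMax {n : Type*} [Fintype n] (A : Matrix n n ℝ) : ℝ :=
  sSup {r : ℝ | ∃ v : n → ℝ, ∑ i, v i ^ 2 = 1 ∧ r = quadForm A v}

/-- Smallest singular value. -/
def sigMin {n : Type*} [Fintype n] (A : Matrix n n ℝ) : ℝ :=
  Real.sqrt (lamMin (Aᵀ * A))

/-- Largest singular value. -/
def sigMax {n : Type*} [Fintype n] (A : Matrix n n ℝ) : ℝ :=
  Real.sqrt (lamMax (Aᵀ * A))

/-- The covariance matrix `Σ = E[𝒳 𝒳ᵀ]` of the monomials indexed by the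
`(d,k)`-multiplicities set, for input `X ∼ P^{⊗d}`. -/
def covMat (P : Measure ℝ) (d k : ℕ) :
    Matrix {α // α ∈ multSet P d k} {α // α ∈ multSet P d k} ℝ :=
  Matrix.of fun a b => ∫ x, monom a.1 x * monom b.1 x ∂(piP P d)

/-!
For ReLU it suffices to approximate `|x|`. Let `T` be a Chebyshev polynomial of odd degree `N` and
let `Q` be the primitive of the even kernel `(T(x) / x)²` with `Q(0) = 0`. The kernel is at most
`1 / x²` on `[-1,1]`, and at least `(N / 2)²` on `(0, 1 / N]`, because
`T(sin φ) = ± sin (N φ)`. Hence `x Q(x) / Q(1)` differs from `|x|` by at most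
`1 / Q(1) ≤ 4 / N`.

The sigmoid is holomorphic on the disc of radius `π > 1`, so its Taylor polynomials converge
geometrically on `[-1,1]`.

In both cases shrinking the polynomial towards `1 / 2` puts its values in `[0,1]` and at most
doubles the error.
-/

section Approximation

open Set Metric
open scoped NNReal ENNReal

theorem exists_approx_mem_closedBall {𝕜 : Type*} [NormedField 𝕜] [NormedAlgebra ℝ 𝕜]
    {σ : 𝕜 → 𝕜} {s : Set 𝕜} {c : 𝕜} {r δ : ℝ} (hσ : MapsTo σ s (closedBall c r)) (hδ : 0 < δ)
    (p : 𝕜[X]) (hp : ∀ x ∈ s, ‖p.eval x - σ x‖ ≤ δ) :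
    ∃ q : 𝕜[X], q.natDegree ≤ p.natDegree ∧ (∀ x ∈ s, ‖q.eval x - σ x‖ ≤ 2 * δ) ∧
      ∀ x ∈ s, q.eval x ∈ closedBall c r := by
  set t : ℝ := r / (r + δ)
  refine ⟨C c + t • (p - C c), ?_, ?_⟩
  · calc (C c + t • (p - C c)).natDegree ≤ (t • (p - C c)).natDegree := by
          rw [natDegree_C_add]
      _ ≤ (p - C c).natDegree := natDegree_smul_le _ _
      _ = p.natDegree := natDegree_sub_C
  rw [← forall₂_and]
  intro x hx
  have hr : 0 ≤ r := nonempty_closedBall.1 ⟨_, hσ hx⟩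
  have hpc : ‖p.eval x - c‖ ≤ r + δ :=
    calc ‖p.eval x - c‖ ≤ ‖σ x - c‖ + ‖p.eval x - σ x‖ := by
          rw [add_comm]; exact norm_sub_le_norm_sub_add_norm_sub _ _ _
      _ ≤ r + δ := add_le_add (mem_closedBall_iff_norm.1 (hσ hx)) (hp x hx)
  have heval : (C c + t • (p - C c)).eval x = c + t • (p.eval x - c) := by simp
  have ht : t * (r + δ) = r := div_mul_cancel₀ _ (by positivity)
  have ht0 : 0 ≤ t := by positivity
  have ht1 : 0 ≤ 1 - t := sub_nonneg.2 (div_le_one_of_le₀ (by linarith) (by linarith))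
  rw [heval]
  constructor
  · calc ‖c + t • (p.eval x - c) - σ x‖
        = ‖(p.eval x - σ x) - (1 - t) • (p.eval x - c)‖ := by
          congr 1; rw [sub_smul, one_smul]; ring
      _ ≤ ‖p.eval x - σ x‖ + (1 - t) * ‖p.eval x - c‖ := by
          refine (norm_sub_le _ _).trans_eq ?_
          rw [norm_smul, Real.norm_of_nonneg ht1]
      _ ≤ δ + (1 - t) * (r + δ) := by gcongr; exact hp x hx
      _ = 2 * δ := by linear_combination -ht
  · rw [mem_closedBall_iff_norm, add_sub_cancel_left, norm_smul, Real.norm_of_nonneg ht0]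
    calc t * ‖p.eval x - c‖ ≤ t * (r + δ) := by gcongr
      _ = r := ht

theorem exists_polynomial_eval_eq_integral (K : ℝ[X]) :
    ∃ Q : ℝ[X], Q.natDegree ≤ K.natDegree + 1 ∧ ∀ x, Q.eval x = ∫ t in 0..x, K.eval t := by
  refine ⟨∑ i ∈ Finset.range (K.natDegree + 1), C (K.coeff i / (i + 1)) * X ^ (i + 1), ?_, ?_⟩
  · refine natDegree_sum_le_of_forall_le _ _ fun i hi => ?_
    exact (natDegree_C_mul_X_pow_le _ _).trans (Finset.mem_range.1 hi)
  · intro x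
    simp only [K.eval_eq_sum_range]
    rw [intervalIntegral.integral_finsetSum fun i _ =>
      Continuous.intervalIntegrable (by fun_prop) _ _]
    simp [eval_finsetSum, intervalIntegral.integral_const_mul, integral_pow, mul_div_assoc,
      div_mul_eq_mul_div]

section EvenKernel

variable {f : ℝ → ℝ}

theorem mul_integral_le_one_of_sq_mul_le_one (hf : Continuous f)
    (hdecay : ∀ x ∈ Ioc (0 : ℝ) 1, x ^ 2 * f x ≤ 1) {x : ℝ} (hx : x ∈ Icc (0 : ℝ) 1) :
    x * ∫ t in x..1, f t ≤ 1 := by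
  rcases hx.1.eq_or_lt with rfl | hx0
  · simp
  have hint : IntervalIntegrable (fun t : ℝ => t ^ (-2 : ℤ)) volume x 1 :=
    intervalIntegral.intervalIntegrable_zpow (.inr (notMem_uIcc_of_lt hx0 one_pos))
  calc x * ∫ t in x..1, f t ≤ x * ∫ t in x..1, t ^ (-2 : ℤ) := by
        gcongr
        refine intervalIntegral.integral_mono_on hx.2 (hf.intervalIntegrable _ _) hint
          fun t ht => ?_
        have htpos : 0 < t := hx0.trans_le ht.1
        rw [_root_.zpow_neg, ← one_div, le_div_iff₀ (by positivity), mul_comm]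
        exact_mod_cast hdecay t ⟨htpos, ht.2⟩
    _ = 1 - x := by
        have hintegral : ∫ t in x..1, t ^ (-2 : ℤ) = x⁻¹ - 1 := by
          rw [integral_zpow (.inr ⟨by norm_num, notMem_uIcc_of_lt hx0 one_pos⟩)]
          norm_num [div_neg]
        rw [hintegral, mul_sub, mul_inv_cancel₀ hx0.ne', mul_one]
    _ ≤ 1 := by linarith

theorem integral_neg_eq_neg_integral_of_even (heven : f.Even) (x : ℝ) :
    ∫ t in 0..(-x), f t = -∫ t in 0..x, f t := by
  rw [← intervalIntegral.integral_symm, ← neg_zero (G := ℝ), ← intervalIntegral.integral_comp_neg]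
  simp only [heven _, neg_zero]

theorem abs_mul_integral_div_sub_abs_le (hf : Continuous f) (heven : f.Even)
    (hnonneg : ∀ x, 0 ≤ f x) (hdecay : ∀ x ∈ Ioc (0 : ℝ) 1, x ^ 2 * f x ≤ 1)
    (hmass : 0 < ∫ t in 0..1, f t) {x : ℝ} (hx : x ∈ Icc (-1 : ℝ) 1) :
    |x * (∫ t in 0..x, f t) / (∫ t in 0..1, f t) - (|x|)| ≤ 1 / ∫ t in 0..1, f t := by
  wlog hx0 : 0 ≤ x generalizing x
  · have := this (x := -x) ⟨by linarith [hx.2], by linarith [hx.1]⟩ (by linarith)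
    rwa [integral_neg_eq_neg_integral_of_even heven, neg_mul_neg, abs_neg] at this
  have hsplit : (∫ t in 0..x, f t) + ∫ t in x..1, f t = ∫ t in 0..1, f t :=
    intervalIntegral.integral_add_adjacent_intervals (hf.intervalIntegrable _ _)
      (hf.intervalIntegrable _ _)
  have htail : 0 ≤ x * ∫ t in x..1, f t :=
    mul_nonneg hx0 (intervalIntegral.integral_nonneg hx.2 fun t _ => hnonneg t)
  calc |x * (∫ t in 0..x, f t) / (∫ t in 0..1, f t) - (|x|)|
      = |-((x * ∫ t in x..1, f t) / ∫ t in 0..1, f t)| := by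
        rw [abs_of_nonneg hx0, div_sub' hmass.ne', ← neg_div]
        congr 2
        linear_combination x * hsplit
    _ = (x * ∫ t in x..1, f t) / ∫ t in 0..1, f t := by
        rw [abs_neg, abs_of_nonneg (div_nonneg htail hmass.le)]
    _ ≤ 1 / ∫ t in 0..1, f t := by
        gcongr
        exact mul_integral_le_one_of_sq_mul_le_one hf hdecay ⟨hx0, hx.2⟩

end EvenKernel

/-- The kernel `(T_N(x) / x)²`, concentrated near the origin, whose primitive approximates a
multiple of the sign function on `[-1,1]`. The division is encoded by `divX`, which drops the
constant term, so the formula is the right one only for odd `N`. -/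
def chebyshevKernel (N : ℕ) : ℝ[X] := divX (Chebyshev.T ℝ N) ^ 2

section ChebyshevKernel

variable {N : ℕ}

theorem natDegree_chebyshevKernel_le (N : ℕ) :
    (chebyshevKernel N).natDegree ≤ 2 * (N - 1) := by
  refine natDegree_pow_le.trans_eq ?_
  rw [natDegree_divX_eq_natDegree_tsub_one, Chebyshev.natDegree_T, Int.natAbs_natCast]

theorem chebyshevKernel_eval_nonneg (N : ℕ) (x : ℝ) : 0 ≤ (chebyshevKernel N).eval x := by
  rw [chebyshevKernel, eval_pow]; positivity

theorem sq_mul_chebyshevKernel_eval (hN : Odd N) (x : ℝ) :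
    x ^ 2 * (chebyshevKernel N).eval x = (Chebyshev.T ℝ N).eval x ^ 2 := by
  have hT0 : (Chebyshev.T ℝ N).coeff 0 = 0 := by
    rw [coeff_zero_eq_eval_zero, Chebyshev.T_eval_zero_of_odd _ (by exact_mod_cast hN)]
  conv_rhs => rw [← X_mul_divX_add (Chebyshev.T ℝ N), hT0]
  simp [chebyshevKernel, mul_pow]

theorem chebyshevKernel_eval_even (hN : Odd N) :
    (fun x => (chebyshevKernel N).eval x).Even := by
  intro x
  rcases eq_or_ne x 0 with rfl | hx
  · rw [neg_zero]
  refine mul_left_cancel₀ (pow_ne_zero 2 hx) ?_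
  rw [sq_mul_chebyshevKernel_eval hN, ← neg_sq x, sq_mul_chebyshevKernel_eval hN,
    Chebyshev.T_eval_neg, Int.negOnePow_odd _ (by exact_mod_cast hN)]
  simp

theorem sq_mul_chebyshevKernel_eval_le_one (hN : Odd N) {x : ℝ} (hx : x ∈ Icc (-1 : ℝ) 1) :
    x ^ 2 * (chebyshevKernel N).eval x ≤ 1 := by
  rw [sq_mul_chebyshevKernel_eval hN, sq_le_one_iff_abs_le_one]
  exact Chebyshev.abs_eval_T_real_le_one _ (abs_le.2 hx)

theorem abs_eval_T_sin {n : ℤ} (hn : Odd n) (φ : ℝ) :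
    |(Chebyshev.T ℝ n).eval (Real.sin φ)| = |Real.sin (n * φ)| := by
  obtain ⟨k, rfl⟩ := hn
  have hangle : ((2 * k + 1 : ℤ) : ℝ) * (Real.pi / 2 - φ) =
      Real.pi / 2 - (2 * k + 1 : ℤ) * φ + k * Real.pi := by
    push_cast; ring
  rw [← Real.cos_pi_div_two_sub, Chebyshev.T_real_cos, hangle, Real.cos_add_int_mul_pi, abs_mul,
    abs_neg_one_zpow, one_mul, Real.cos_pi_div_two_sub]

theorem mul_abs_le_abs_eval_T (hN : Odd N) {x : ℝ} (hx : |x| ≤ 1 / N) :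
    N / 2 * |x| ≤ |(Chebyshev.T ℝ N).eval x| := by
  have hNpos : (0 : ℝ) < N := by exact_mod_cast hN.pos
  have hx1 : |x| ≤ 1 := hx.trans (div_le_one_of_le₀ (by exact_mod_cast hN.pos) hNpos.le)
  obtain ⟨φ, hφ, rfl⟩ : ∃ φ, |φ| ≤ Real.pi / 2 ∧ Real.sin φ = x :=
    ⟨Real.arcsin x, abs_le.2 ⟨Real.neg_pi_div_two_le_arcsin x, Real.arcsin_le_pi_div_two x⟩,
      Real.sin_arcsin (abs_le.1 hx1).1 (abs_le.1 hx1).2⟩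
  have hNφ : |N * φ| ≤ Real.pi / 2 := by
    have := (Real.mul_abs_le_abs_sin hφ).trans hx
    rw [div_mul_eq_mul_div, div_le_div_iff₀ Real.pi_pos hNpos] at this
    rw [abs_mul, abs_of_pos hNpos]
    linarith
  have hpi : 1 / 2 ≤ 2 / Real.pi := by
    rw [div_le_div_iff₀ two_pos Real.pi_pos]; linarith [Real.pi_le_four]
  calc N / 2 * |Real.sin φ| ≤ N / 2 * |φ| := 
        mul_le_mul_of_nonneg_left Real.abs_sin_le_abs (by positivity)
    _ = 1 / 2 * |N * φ| := by rw [abs_mul, abs_of_pos hNpos]; ring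
    _ ≤ 2 / Real.pi * |N * φ| := by gcongr
    _ ≤ |Real.sin (N * φ)| := Real.mul_abs_le_abs_sin hNφ
    _ = |(Chebyshev.T ℝ N).eval (Real.sin φ)| := by
        rw [abs_eval_T_sin (by exact_mod_cast hN), Int.cast_natCast]

theorem div_two_sq_le_chebyshevKernel_eval (hN : Odd N) {x : ℝ} (hx0 : x ≠ 0)
    (hx : |x| ≤ 1 / N) : (N / 2 : ℝ) ^ 2 ≤ (chebyshevKernel N).eval x := by
  refine le_of_mul_le_mul_left ?_ (pow_pos (abs_pos.2 hx0) 2)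
  calc |x| ^ 2 * (N / 2 : ℝ) ^ 2 = (N / 2 * |x|) ^ 2 := by ring
    _ ≤ |(Chebyshev.T ℝ N).eval x| ^ 2 := by gcongr; exact mul_abs_le_abs_eval_T hN hx
    _ = |x| ^ 2 * (chebyshevKernel N).eval x := by
        rw [sq_abs, sq_abs, sq_mul_chebyshevKernel_eval hN]

theorem div_four_le_integral_chebyshevKernel (hN : Odd N) :
    (N / 4 : ℝ) ≤ ∫ t in 0..1, (chebyshevKernel N).eval t := by
  have hNpos : (0 : ℝ) < N := by exact_mod_cast hN.pos
  have hN1 : (1 / N : ℝ) ≤ 1 := div_le_one_of_le₀ (by exact_mod_cast hN.pos) hNpos.le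
  have hint (a b : ℝ) : IntervalIntegrable (fun t => (chebyshevKernel N).eval t) volume a b :=
    (chebyshevKernel N).continuous.intervalIntegrable a b
  calc (N / 4 : ℝ) = ∫ _ in (0 : ℝ)..1 / N, (N / 2 : ℝ) ^ 2 := by
        rw [intervalIntegral.integral_const, smul_eq_mul]; field_simp; norm_num
    _ ≤ ∫ t in 0..1 / N, (chebyshevKernel N).eval t := by
        refine intervalIntegral.integral_mono_on_of_le_Ioo (by positivity)
          intervalIntegrable_const (hint _ _) fun t ht => ?_
        have habs : |t| ≤ 1 / N := (abs_of_pos ht.1).trans_le ht.2.le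
        exact div_two_sq_le_chebyshevKernel_eval hN ht.1.ne' habs
    _ ≤ ∫ t in 0..1, (chebyshevKernel N).eval t :=
        intervalIntegral.integral_mono_interval le_rfl (by positivity) hN1
          (.of_forall fun t => chebyshevKernel_eval_nonneg N t) (hint _ _)

theorem exists_polynomial_approx_abs (hN : Odd N) :
    ∃ A : ℝ[X], A.natDegree ≤ 2 * N ∧ ∀ x ∈ Icc (-1 : ℝ) 1, |A.eval x - (|x|)| ≤ 4 / N := by
  have hNpos : (0 : ℝ) < N := by exact_mod_cast hN.pos
  obtain ⟨Q, hQdeg, hQ⟩ := exists_polynomial_eval_eq_integral (chebyshevKernel N)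
  have hmass := div_four_le_integral_chebyshevKernel hN
  have hmass_pos : 0 < ∫ t in 0..1, (chebyshevKernel N).eval t := by linarith
  refine ⟨X * Q * C (Q.eval 1)⁻¹, ?_, fun x hx => ?_⟩
  · have hXQ : (X * Q).natDegree ≤ 1 + Q.natDegree := natDegree_mul_le.trans_eq (by simp)
    have hK := natDegree_chebyshevKernel_le N
    have hN1 := hN.pos
    exact (natDegree_mul_C_le _ _).trans (by omega)
  · calc |(X * Q * C (Q.eval 1)⁻¹).eval x - (|x|)|
        = |x * (∫ t in 0..x, (chebyshevKernel N).eval t) /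
            (∫ t in 0..1, (chebyshevKernel N).eval t) - (|x|)| := by
          simp only [eval_mul, eval_X, eval_C, hQ, div_eq_mul_inv]
      _ ≤ 1 / ∫ t in 0..1, (chebyshevKernel N).eval t :=
          abs_mul_integral_div_sub_abs_le (chebyshevKernel N).continuous
            (chebyshevKernel_eval_even hN) (chebyshevKernel_eval_nonneg N)
            (fun _ ht => sq_mul_chebyshevKernel_eval_le_one hN ⟨by linarith [ht.1], ht.2⟩)
            hmass_pos hx
      _ ≤ 1 / (N / 4) := by gcongr
      _ = 4 / N := one_div_div _ _

end ChebyshevKernel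

theorem max_zero_mem_Icc {x : ℝ} (hx : x ∈ Icc (-1 : ℝ) 1) : max x 0 ∈ Icc (0 : ℝ) 1 :=
  ⟨le_max_right _ _, max_le hx.2 zero_le_one⟩

theorem closedBall_half_eq_Icc : closedBall (1 / 2 : ℝ) (1 / 2) = Icc 0 1 := by
  rw [Real.closedBall_eq_Icc]; norm_num

theorem exists_polynomial_approx_relu {ε : ℝ} (hε : ε ∈ Ioc (0 : ℝ) 1) :
    ∃ p : ℝ[X], (p.natDegree : ℝ) ≤ 14 / ε ∧
      (∀ x ∈ Icc (-1 : ℝ) 1, |p.eval x - max x 0| ≤ ε) ∧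
      ∀ x ∈ Icc (-1 : ℝ) 1, p.eval x ∈ Icc (0 : ℝ) 1 := by
  obtain ⟨hε0, hε1⟩ := hε
  set N : ℕ := 2 * ⌈2 / ε⌉₊ + 1 with hN
  have hNlower : 4 / ε ≤ N := by
    have := Nat.le_ceil (2 / ε)
    rw [hN]; push_cast; linarith [show 4 / ε = 2 * (2 / ε) by ring]
  have hNupper : (2 * N : ℝ) ≤ 14 / ε := by
    have := Nat.ceil_lt_add_one (a := 2 / ε) (by positivity)
    have := (one_le_div hε0).2 hε1
    rw [hN]; push_cast
    linarith [show 14 / ε = 4 * (2 / ε) + 6 * (1 / ε) by ring]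
  have hNpos : (0 : ℝ) < N := by positivity
  obtain ⟨A, hAdeg, hA⟩ := exists_polynomial_approx_abs (N := N) ⟨_, hN⟩
  have happrox : ∀ x ∈ Icc (-1 : ℝ) 1, |(C (1 / 2) * (X + A)).eval x - max x 0| ≤ ε / 2 := by
    intro x hx
    calc |(C (1 / 2) * (X + A)).eval x - max x 0| = |(A.eval x - |x|) / 2| := by
          have hmax : max x 0 = (x + |x|) / 2 := by
            have hdiff := max_sub_min_eq_abs' x 0
            rw [sub_zero] at hdiff
            linarith [max_add_min x 0]
          simp only [hmax, eval_mul, eval_C, eval_add, eval_X]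
          congr 1
          ring
      _ ≤ 4 / N / 2 := by rw [abs_div, abs_two]; gcongr; exact hA x hx
      _ ≤ ε / 2 := by gcongr; exact (div_le_comm₀ hε0 hNpos).1 hNlower
  obtain ⟨q, hqdeg, hq⟩ := exists_approx_mem_closedBall (c := 1 / 2) (r := 1 / 2)
    (fun x hx => closedBall_half_eq_Icc ▸ max_zero_mem_Icc hx) (half_pos hε0) _ happrox
  rw [closedBall_half_eq_Icc, mul_div_cancel₀ ε two_ne_zero] at hq
  refine ⟨q, le_trans ?_ hNupper, hq⟩
  have hdeg : (C (1 / 2) * (X + A)).natDegree ≤ 2 * N := by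
    refine (natDegree_C_mul_le _ _).trans (natDegree_add_le_of_degree_le ?_ hAdeg)
    rw [natDegree_X]; omega
  exact_mod_cast hqdeg.trans hdeg

theorem exists_geometric_polynomial_approx {𝕜 : Type*} [NontriviallyNormedField 𝕜] {f : 𝕜 → 𝕜}
    {P : FormalMultilinearSeries 𝕜 𝕜 𝕜} {R : ℝ≥0∞} {ρ : ℝ≥0} (hf : HasFPowerSeriesOnBall f P 0 R)
    (hρ : ρ < R) :
    ∃ a ∈ Ioo (0 : ℝ) 1, ∃ B > (0 : ℝ), ∀ n : ℕ, ∃ p : 𝕜[X], p.natDegree ≤ n ∧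
      ∀ x ∈ closedBall (0 : 𝕜) ρ, ‖p.eval x - f x‖ ≤ B * a ^ n := by
  obtain ⟨ρ', hρρ', hρ'R⟩ := ENNReal.lt_iff_exists_nnreal_btwn.1 hρ
  obtain ⟨a, ha, B, hB, happrox⟩ := hf.uniform_geometric_approx hρ'R
  refine ⟨a, ha, B, hB, fun n => ⟨∑ i ∈ Finset.range n, C (P.coeff i) * X ^ i, ?_, ?_⟩⟩
  · exact natDegree_sum_le_of_forall_le _ _ fun i hi =>
      (natDegree_C_mul_X_pow_le _ _).trans (Finset.mem_range.1 hi).le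
  · intro x hx
    have hxρ' : x ∈ ball (0 : 𝕜) ρ' :=
      closedBall_subset_ball (by exact_mod_cast hρρ') hx
    have heval : (∑ i ∈ Finset.range n, C (P.coeff i) * X ^ i).eval x = P.partialSum n x := by
      simp only [eval_finsetSum, eval_mul, eval_C, eval_pow, eval_X,
        FormalMultilinearSeries.partialSum, FormalMultilinearSeries.apply_eq_pow_smul_coeff,
        smul_eq_mul, mul_comm]
    rw [heval, norm_sub_rev]
    simpa only [zero_add] using happrox x hxρ' n

theorem exists_hasFPowerSeriesOnBall_re_comp_ofReal {f : ℂ → ℂ}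
    {P : FormalMultilinearSeries ℂ ℂ ℂ} {x : ℝ} {R : ℝ≥0∞}
    (hf : HasFPowerSeriesOnBall f P (x : ℂ) R) :
    ∃ Q : FormalMultilinearSeries ℝ ℝ ℝ, HasFPowerSeriesOnBall (fun y : ℝ => (f y).re) Q x R := by
  have hf' : HasFPowerSeriesOnBall f (P.restrictScalars ℝ) (Complex.ofRealCLM x) R :=
    hf.restrictScalars
  have hnorm : ‖Complex.ofRealCLM‖ₑ = 1 := by
    rw [← ofReal_norm, Complex.ofRealCLM_norm, ENNReal.ofReal_one]
  have hre := Complex.reCLM.comp_hasFPowerSeriesOnBall hf'.compContinuousLinearMap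
  rw [hnorm, div_one] at hre
  exact ⟨_, hre⟩

theorem exists_nat_le_mul_log_and_mul_pow_le {a B ε₀ : ℝ} (ha : a ∈ Ioo (0 : ℝ) 1)
    (hε₀ : ε₀ ∈ Ioo (0 : ℝ) 1) :
    ∃ K > (0 : ℝ), ∀ ε ∈ Ioc 0 ε₀, ∃ n : ℕ, (n : ℝ) ≤ K * Real.log (1 / ε) ∧ B * a ^ n ≤ ε := by
  obtain ⟨m, hm⟩ : ∃ m : ℕ, B * a ^ m ≤ 1 := by
    obtain ⟨m, hm⟩ := exists_pow_lt_of_lt_one (show 0 < 1 / (|B| + 1) by positivity) ha.2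
    refine ⟨m, (mul_le_mul_of_nonneg_right (le_abs_self B) (pow_nonneg ha.1.le m)).trans ?_⟩
    rw [lt_div_iff₀ (by positivity)] at hm
    linarith [pow_pos ha.1 m]
  set l := Real.log (1 / a)
  set L₀ := Real.log (1 / ε₀)
  have hl : 0 < l := Real.log_pos ((one_lt_div ha.1).2 ha.2)
  have hL₀ : 0 < L₀ := Real.log_pos ((one_lt_div hε₀.1).2 hε₀.2)
  refine ⟨1 / l + (m + 1) / L₀, by positivity, fun ε hε => ?_⟩
  set L := Real.log (1 / ε)
  have hLL₀ : L₀ ≤ L :=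
    Real.log_le_log (one_div_pos.2 hε₀.1) (one_div_le_one_div_of_le hε.1 hε.2)
  refine ⟨m + ⌈L / l⌉₊, ?_, ?_⟩
  · calc ((m + ⌈L / l⌉₊ : ℕ) : ℝ) ≤ m + (L / l + 1) := by
          push_cast
          gcongr
          exact (Nat.ceil_lt_add_one (div_nonneg (hL₀.le.trans hLL₀) hl.le)).le
      _ = L / l + (m + 1) * 1 := by ring
      _ ≤ L / l + (m + 1) * (L / L₀) := by gcongr; exact (one_le_div hL₀).2 hLL₀
      _ = (1 / l + (m + 1) / L₀) * L := by ring
  · have hpow : a ^ ⌈L / l⌉₊ ≤ ε := by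
      rw [← Real.log_le_log_iff (pow_pos ha.1 _) hε.1, Real.log_pow]
      have hceil := (div_le_iff₀ hl).1 (Nat.le_ceil (L / l))
      simp only [l, L, one_div, Real.log_inv] at hceil ⊢
      linarith
    calc B * a ^ (m + ⌈L / l⌉₊) = B * a ^ m * a ^ ⌈L / l⌉₊ := by ring
      _ ≤ 1 * ε := by gcongr; exact pow_nonneg ha.1.le _
      _ = ε := one_mul ε

theorem exists_polynomial_log_approx_of_hasFPowerSeriesOnBall {𝕜 : Type*}
    [NontriviallyNormedField 𝕜] [NormedAlgebra ℝ 𝕜] {σ : 𝕜 → 𝕜}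
    {P : FormalMultilinearSeries 𝕜 𝕜 𝕜} {R : ℝ≥0∞} {ρ : ℝ≥0} {c : 𝕜} {r : ℝ}
    (hσ : HasFPowerSeriesOnBall σ P 0 R) (hρ : ρ < R)
    (hmaps : MapsTo σ (closedBall 0 ρ) (closedBall c r)) (hr : r ∈ Ioo (0 : ℝ) 1) :
    ∃ K > (0 : ℝ), ∀ ε ∈ Ioc (0 : ℝ) 1, ∃ p : 𝕜[X],
      (p.natDegree : ℝ) ≤ K * Real.log (1 / ε) ∧
      (∀ x ∈ closedBall (0 : 𝕜) ρ, ‖p.eval x - σ x‖ ≤ ε) ∧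
      ∀ x ∈ closedBall (0 : 𝕜) ρ, p.eval x ∈ closedBall c r := by
  obtain ⟨a, ha, B, -, happrox⟩ := exists_geometric_polynomial_approx hσ hρ
  obtain ⟨K, hK, hdegree⟩ := exists_nat_le_mul_log_and_mul_pow_le (B := 2 * B) ha hr
  refine ⟨K, hK, fun ε hε => ?_⟩
  rcases le_or_gt ε r with hεr | hrε
  · obtain ⟨n, hn, hBn⟩ := hdegree ε ⟨hε.1, hεr⟩
    obtain ⟨p, hpn, hp⟩ := happrox n
    obtain ⟨q, hqp, hq⟩ := exists_approx_mem_closedBall hmaps (half_pos hε.1) p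
      fun x hx => (hp x hx).trans (by linarith)
    rw [mul_div_cancel₀ ε two_ne_zero] at hq
    exact ⟨q, le_trans (by exact_mod_cast hqp.trans hpn) hn, hq⟩
  · refine ⟨C c, ?_, fun x hx => ?_, fun x _ => ?_⟩
    · rw [natDegree_C, Nat.cast_zero]
      exact mul_nonneg hK.le (Real.log_nonneg ((one_le_div hε.1).2 hε.2))
    · rw [eval_C, norm_sub_rev]
      exact (mem_closedBall_iff_norm.1 (hmaps hx)).trans hrε.le
    · rw [eval_C]
      exact mem_closedBall_self hr.1.le

theorem exp_div_one_add_exp_eq_sigmoid (x : ℝ) :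
    Real.exp x / (1 + Real.exp x) = Real.sigmoid x := by
  rw [Real.sigmoid_def, Real.exp_neg]
  field_simp
  rw [add_comm]

theorem one_add_exp_ne_zero_of_abs_im_lt_pi {z : ℂ} (hz : |z.im| < Real.pi) :
    1 + Complex.exp z ≠ 0 := by
  intro h
  have hlog : Complex.log (-1) = z := by
    rw [← eq_neg_of_add_eq_zero_right h]
    exact Complex.log_exp (abs_lt.1 hz).1 (abs_lt.1 hz).2.le
  rw [← hlog, Complex.log_neg_one] at hz
  simp [abs_of_pos Real.pi_pos] at hz

theorem exists_hasFPowerSeriesOnBall_sigmoid {R : ℝ≥0} (hR : 0 < R) (hRpi : R < Real.pi) :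
    ∃ P : FormalMultilinearSeries ℝ ℝ ℝ, HasFPowerSeriesOnBall Real.sigmoid P 0 R := by
  have hdiff : DifferentiableOn ℂ (fun z => (1 + Complex.exp (-z))⁻¹) (closedBall 0 R) := by
    intro z hz
    have him : |(-z).im| < Real.pi :=
      calc |(-z).im| ≤ ‖-z‖ := Complex.abs_im_le_norm _
        _ ≤ R := by rw [norm_neg]; exact mem_closedBall_zero_iff.1 hz
        _ < Real.pi := hRpi
    have hne := one_add_exp_ne_zero_of_abs_im_lt_pi him
    fun_prop (disch := assumption)
  obtain ⟨P, hP⟩ := exists_hasFPowerSeriesOnBall_re_comp_ofReal (x := 0)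
    (by rw [Complex.ofReal_zero]; exact hdiff.hasFPowerSeriesOnBall hR)
  refine ⟨P, hP.congr fun x _ => ?_⟩
  rw [Real.sigmoid_def]
  norm_cast

theorem lipschitzWith_sigmoid : LipschitzWith (1 / 4) Real.sigmoid := by
  refine lipschitzWith_of_nnnorm_deriv_le differentiable_sigmoid fun x => ?_
  have h0 := Real.sigmoid_nonneg x
  have h1 := Real.sigmoid_le_one x
  rw [← NNReal.coe_le_coe, coe_nnnorm, Real.deriv_sigmoid,
    Real.norm_of_nonneg (mul_nonneg h0 (sub_nonneg.2 h1))]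
  push_cast
  nlinarith [sq_nonneg (Real.sigmoid x - 1 / 2)]

theorem sigmoid_mem_Icc (x : ℝ) : Real.sigmoid x ∈ Icc (0 : ℝ) 1 :=
  ⟨Real.sigmoid_nonneg x, Real.sigmoid_le_one x⟩

theorem exists_polynomial_approx_sigmoid :
    ∃ K > (0 : ℝ), ∀ ε ∈ Ioc (0 : ℝ) 1, ∃ p : ℝ[X],
      (p.natDegree : ℝ) ≤ K * Real.log (1 / ε) ∧
      (∀ x ∈ Icc (-1 : ℝ) 1, |p.eval x - Real.sigmoid x| ≤ ε) ∧
      ∀ x ∈ Icc (-1 : ℝ) 1, p.eval x ∈ Icc (0 : ℝ) 1 := by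
  obtain ⟨P, hP⟩ := exists_hasFPowerSeriesOnBall_sigmoid (R := 2) two_pos
    (lt_trans (by norm_num) Real.pi_gt_three)
  have hball : closedBall (0 : ℝ) (1 : ℝ≥0) = Icc (-1) 1 := by
    rw [Real.closedBall_eq_Icc]; norm_num
  have h := exists_polynomial_log_approx_of_hasFPowerSeriesOnBall (ρ := 1) (c := 1 / 2)
    (r := 1 / 2) hP (by norm_num) (fun x _ => closedBall_half_eq_Icc ▸ sigmoid_mem_Icc x)
    (by norm_num)
  rwa [hball, closedBall_half_eq_Icc] at h

end Approximation

/-- ReLU and sigmoid are admissible activations on `[-1,1]`: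
each is 1-Lipschitz and bounded by 1 there, and admits uniform polynomial approximants
mapping `[-1,1]` into `[0,1]`, of degree `O(1/ε)` for ReLU and `O(log(1/ε))` for sigmoid. -/
theorem relu_and_sigmoid_admissible :
    (LipschitzOnWith 1 (fun x : ℝ => max x 0) (Set.Icc (-1) 1) ∧
      (∀ x ∈ Set.Icc (-1 : ℝ) 1, |max x 0| ≤ 1) ∧
      ∃ C > (0 : ℝ), ∀ ε ∈ Set.Ioc (0 : ℝ) 1, ∃ p : Polynomial ℝ,
        (p.natDegree : ℝ) ≤ C / ε ∧
        (∀ x ∈ Set.Icc (-1 : ℝ) 1, |p.eval x - max x 0| ≤ ε) ∧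
        ∀ x ∈ Set.Icc (-1 : ℝ) 1, p.eval x ∈ Set.Icc (0 : ℝ) 1) ∧
    (LipschitzOnWith 1 (fun x : ℝ => Real.exp x / (1 + Real.exp x)) (Set.Icc (-1) 1) ∧
      (∀ x ∈ Set.Icc (-1 : ℝ) 1, |Real.exp x / (1 + Real.exp x)| ≤ 1) ∧
      ∃ C > (0 : ℝ), ∀ ε ∈ Set.Ioc (0 : ℝ) 1, ∃ p : Polynomial ℝ,
        (p.natDegree : ℝ) ≤ C * Real.log (1 / ε) ∧
        (∀ x ∈ Set.Icc (-1 : ℝ) 1, |p.eval x - Real.exp x / (1 + Real.exp x)| ≤ ε) ∧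
        ∀ x ∈ Set.Icc (-1 : ℝ) 1, p.eval x ∈ Set.Icc (0 : ℝ) 1) := by
  simp only [exp_div_one_add_exp_eq_sigmoid]
  have abs_le_one {y : ℝ} (hy : y ∈ Set.Icc (0 : ℝ) 1) : |y| ≤ 1 :=
    (abs_of_nonneg hy.1).trans_le hy.2
  exact ⟨⟨(LipschitzWith.id.max_const 0).lipschitzOnWith,
      fun x hx => abs_le_one (max_zero_mem_Icc hx),
      14, by norm_num, fun ε hε => exists_polynomial_approx_relu hε⟩,
    ⟨(lipschitzWith_sigmoid.weaken (div_le_self zero_le_one (by norm_num))).lipschitzOnWith,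
      fun x _ => abs_le_one (sigmoid_mem_Icc x),
      exists_polynomial_approx_sigmoid⟩⟩

end
end

section
/- Let σ be a real polynomial of degree k, let X^(1),…,X^(N) ∈ ℝ^d be i.i.d. random vectors whose coordinates are jointly continuous, and let Y_i = f(W*, X^(i)) be labels generated by an L-layer neural network with activation σ and weights W*. Let C = ∪_{t=0}^{k^L} F_{t,t} (all multi-indices of total degree at most k^L) and let ĥ(x) = Σ_{α∈C} q̂_α x_α be the tensor-OLS predictor fitted to (X^(i), Y_i), i = 1,…,N. Then, as soon as N ≥ Σ_{t=0}^{k^L} binom(d+t−1, t), with probability one over X^(1),…,X^(N) it holds that ĥ(x) = f(W*, x) for every x ∈ ℝ^d. -/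
open MeasureTheory Polynomial Matrix
open scoped Classical

noncomputable section

/-!
A network whose activation is a polynomial of degree `k` is itself a polynomial in its input, of
total degree at most `k ^ L`, so the regression is realizable: some coefficient vector has zero
empirical risk, and every least-squares solution interpolates the labels. It remains to see that
almost surely two predictors agreeing on the sample have the same coefficients, i.e. that the
monomial features, evaluated on the sample, are linearly independent. With as many points as
features this is the nonvanishing of a determinant: expanding it along the row of one point gives
a combination of the features at that point whose coefficients are minors in the other points, and
by induction these minors do not all vanish. Fubini's theorem then concludes, because a nonzero
combination of monomials vanishes only on a null set.
-/

section ProductMeasure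

variable {ι κ : Type*} [Fintype ι] [Fintype κ]

lemma ae_pi_of_ae_ae_cons {n : ℕ} {E : Fin (n + 1) → Type*} [∀ i, MeasurableSpace (E i)]
    (μ : ∀ i, Measure (E i)) [∀ i, SigmaFinite (μ i)] {p : (∀ i, E i) → Prop}
    (hp : MeasurableSet {X | p X})
    (h : ∀ᵐ Z ∂Measure.pi fun i : Fin n => μ i.succ, ∀ᵐ x ∂μ 0, p (Fin.cons x Z)) :
    ∀ᵐ X ∂Measure.pi μ, p X := by
  let e : (∀ i, E i) ≃ᵐ E 0 × ∀ i : Fin n, E i.succ := MeasurableEquiv.piFinSuccAbove E 0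
  have he : MeasurePreserving e (Measure.pi μ) ((μ 0).prod (Measure.pi fun i => μ i.succ)) :=
    measurePreserving_piFinSuccAbove μ 0
  have hcons : ∀ Z x, e.symm (x, Z) = Fin.cons x Z := fun Z x => e.symm_apply_eq.2 rfl
  have hprod : ∀ᵐ z ∂(Measure.pi fun i : Fin n => μ i.succ).prod (μ 0), p (e.symm z.swap) := by
    refine (Measure.ae_prod_iff_ae_ae (measurable_swap (e.symm.measurable hp))).2 ?_
    simpa [hcons] using h
  simpa using (Measure.measurePreserving_swap.comp he).quasiMeasurePreserving.ae hprod

lemma measurePreserving_pi_comp_of_injective {E : κ → Type*} [∀ i, MeasurableSpace (E i)]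
    (μ : ∀ i, Measure (E i)) [∀ i, IsProbabilityMeasure (μ i)] {f : ι → κ}
    (hf : Function.Injective f) :
    MeasurePreserving (fun (X : ∀ i, E i) j => X (f j)) (Measure.pi μ)
      (Measure.pi fun j => μ (f j)) := by
  have hindep : ProbabilityTheory.iIndepFun (fun i (X : ∀ i, E i) => X i) (Measure.pi μ) :=
    ProbabilityTheory.iIndepFun_pi (X := fun _ => id) fun _ => aemeasurable_id
  refine ⟨by fun_prop, ?_⟩
  rw [(hindep.precomp hf).map_fun_eq_pi_map fun j => (measurable_pi_apply (f j)).aemeasurable]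
  simp only [(measurePreserving_eval μ _).map_eq]

end ProductMeasure

section GenericIndependence

variable {R : Type*} [CommRing R] [MeasurableSpace R] [MeasurableAdd₂ R] [MeasurableMul₂ R]
  [MeasurableSingletonClass R] {E : Type*} [MeasurableSpace E]

lemma ae_det_ne_zero [Nontrivial R] {n : ℕ} (μ : Fin n → Measure E) [∀ i, SigmaFinite (μ i)]
    {g : Fin n → E → R} (hg : ∀ j, Measurable (g j))
    (hne : ∀ i, ∀ c : Fin n → R, c ≠ 0 → ∀ᵐ x ∂μ i, ∑ j, c j * g j x ≠ 0) :
    ∀ᵐ X ∂Measure.pi μ, (Matrix.of fun i j => g j (X i)).det ≠ 0 := by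
  induction n with
  | zero => simp
  | succ n ih =>
    have hdet : Measurable fun X : Fin (n + 1) → E => (Matrix.of fun i j => g j (X i)).det := by
      simp only [Matrix.det_apply', Matrix.of_apply]
      fun_prop
    refine ae_pi_of_ae_ae_cons μ (hdet (measurableSet_singleton 0).compl) ?_
    have hminor : ∀ᵐ Z ∂Measure.pi fun i : Fin n => μ i.succ,
        (Matrix.of fun i j => g (Fin.succ j) (Z i)).det ≠ 0 := by
      refine ih (fun i => μ i.succ) (fun j => hg j.succ) fun i c hc => ?_
      have hc' : (Fin.cons 0 c : Fin (n + 1) → R) ≠ 0 := fun h =>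
        hc (funext fun j => by simpa using congrFun h j.succ)
      simpa [Fin.sum_univ_succ] using hne i.succ _ hc'
    filter_upwards [hminor] with Z hZ
    let cofactor : Fin (n + 1) → R := fun j =>
      (-1) ^ (j : ℕ) * (Matrix.of fun i l => g (j.succAbove l) (Z i)).det
    have hcofactor : cofactor ≠ 0 := fun h => hZ (by simpa [cofactor] using congrFun h 0)
    filter_upwards [hne 0 cofactor hcofactor] with x hx
    have hlaplace : (Matrix.of fun i j => g j ((Fin.cons x Z : Fin (n + 1) → E) i)).det
        = ∑ j, cofactor j * g j x := by
      rw [Matrix.det_succ_row_zero]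
      refine Finset.sum_congr rfl fun j _ => ?_
      rw [mul_right_comm]
      rfl
    rwa [hlaplace]

lemma ae_linearIndependent_of_card_le [IsDomain R] {ι κ : Type*} [Fintype ι] [Fintype κ]
    (μ : κ → Measure E) [∀ i, IsProbabilityMeasure (μ i)] (hcard : Fintype.card ι ≤ Fintype.card κ)
    {g : ι → E → R} (hg : ∀ j, Measurable (g j))
    (hne : ∀ i, ∀ c : ι → R, c ≠ 0 → ∀ᵐ x ∂μ i, ∑ j, c j * g j x ≠ 0) :
    ∀ᵐ X ∂Measure.pi μ, LinearIndependent R fun j i => g j (X i) := by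
  let e := Fintype.equivFin ι
  obtain ⟨f⟩ : Nonempty (Fin (Fintype.card ι) ↪ κ) :=
    Function.Embedding.nonempty_of_card_le (by simpa using hcard)
  have hdet : ∀ᵐ X ∂Measure.pi fun i => μ (f i),
      (Matrix.of fun i j => g (e.symm j) (X i)).det ≠ 0 := by
    refine ae_det_ne_zero _ (fun j => hg _) fun i c hc => ?_
    have hc' : c ∘ e ≠ 0 := fun h => hc (funext fun j => by simpa using congrFun h (e.symm j))
    simpa [← e.symm.sum_comp] using hne (f i) (c ∘ e) hc'
  filter_upwards [(measurePreserving_pi_comp_of_injective μ f.injective).quasiMeasurePreserving.ae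
    hdet] with X hX
  rw [← linearIndependent_equiv e.symm]
  exact (Matrix.linearIndependent_cols_of_det_ne_zero hX).of_comp (LinearMap.funLeft R R f)

end GenericIndependence

section ZeroSets

variable {R : Type*} [CommRing R] [IsDomain R] [MeasurableSpace R]

lemma ae_polynomial_eval_ne_zero (μ : Measure R) [NullSingletonClass μ] {p : Polynomial R}
    (hp : p ≠ 0) : ∀ᵐ x ∂μ, p.eval x ≠ 0 :=
  measure_eq_zero_iff_ae_notMem.1 ((Polynomial.finite_setOfPred_isRoot hp).measure_zero μ)

variable [MeasurableAdd₂ R] [MeasurableMul₂ R] [MeasurableSingletonClass R]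

lemma ae_mvPolynomial_eval_ne_zero {n : ℕ} (μ : Fin n → Measure R) [∀ i, SigmaFinite (μ i)]
    [∀ i, NullSingletonClass (μ i)] {p : MvPolynomial (Fin n) R} (hp : p ≠ 0) :
    ∀ᵐ x ∂Measure.pi μ, MvPolynomial.eval x p ≠ 0 := by
  induction n with
  | zero =>
    refine ae_of_all _ fun x hx => hp ?_
    rw [MvPolynomial.eq_C_of_isEmpty p, MvPolynomial.eval_C] at hx
    rw [MvPolynomial.eq_C_of_isEmpty p, hx, map_zero]
  | succ n ih =>
    have heval : Measurable fun x => MvPolynomial.eval x p := by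
      simp only [MvPolynomial.eval_eq']
      fun_prop
    refine ae_pi_of_ae_ae_cons μ (heval (measurableSet_singleton 0).compl) ?_
    let P := MvPolynomial.finSuccEquiv R n p
    have hP : P.leadingCoeff ≠ 0 := by simpa [P] using hp
    filter_upwards [ih (fun i => μ i.succ) hP] with Z hZ
    have hslice : P.map (MvPolynomial.eval Z) ≠ 0 := fun h => hZ (by
      simpa using congrArg (Polynomial.coeff · P.natDegree) h)
    simpa only [MvPolynomial.eval_eq_eval_mv_eval'] using ae_polynomial_eval_ne_zero (μ 0) hslice

end ZeroSets

section PolynomialFunctions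

variable {σ : Type*} {R : Type*} [CommSemiring R]

lemma totalDegree_aeval_le (Q : Polynomial R) (p : MvPolynomial σ R) :
    (Polynomial.aeval p Q).totalDegree ≤ Q.natDegree * p.totalDegree := by
  rw [Polynomial.aeval_eq_sum_range]
  refine MvPolynomial.totalDegree_finsetSum_le fun i hi => ?_
  calc (Q.coeff i • p ^ i).totalDegree
      ≤ (p ^ i).totalDegree := MvPolynomial.totalDegree_smul_le _ _
    _ ≤ i * p.totalDegree := MvPolynomial.totalDegree_pow _ _
    _ ≤ Q.natDegree * p.totalDegree := by
      gcongr
      exact Finset.mem_range_succ_iff.1 hi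

variable (σ R) in
/-- The space of polynomial functions of total degree at most `D` in the variables `σ`: it
contains the functions computed by networks with a polynomial activation. Its elements are functions
rather than formal polynomials, which need not be determined by their values. -/
def polyFunDegreeLE (D : ℕ) : Submodule R ((σ → R) → R) :=
  (MvPolynomial.restrictTotalDegree σ R D).map
    (LinearMap.pi fun x => (MvPolynomial.aeval x).toLinearMap)

lemma mem_polyFunDegreeLE {D : ℕ} {f : (σ → R) → R} :
    f ∈ polyFunDegreeLE σ R D ↔
      ∃ p : MvPolynomial σ R, p.totalDegree ≤ D ∧ ∀ x, MvPolynomial.eval x p = f x := by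
  simp only [polyFunDegreeLE, Submodule.mem_map, MvPolynomial.mem_restrictTotalDegree, funext_iff]
  rfl

lemma coord_mem_polyFunDegreeLE [Nontrivial R] (i : σ) :
    (fun x => x i) ∈ polyFunDegreeLE σ R 1 :=
  mem_polyFunDegreeLE.2
    ⟨MvPolynomial.X i, (MvPolynomial.totalDegree_X i).le, fun _ => MvPolynomial.eval_X i⟩

lemma polynomial_eval_comp_mem_polyFunDegreeLE (Q : Polynomial R) {D : ℕ} {f : (σ → R) → R}
    (hf : f ∈ polyFunDegreeLE σ R D) :
    (fun x => Q.eval (f x)) ∈ polyFunDegreeLE σ R (Q.natDegree * D) := by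
  obtain ⟨p, hp, hpf⟩ := mem_polyFunDegreeLE.1 hf
  refine mem_polyFunDegreeLE.2 ⟨Polynomial.aeval p Q,
    (totalDegree_aeval_le Q p).trans (by gcongr), fun x => ?_⟩
  rw [← hpf, ← MvPolynomial.coe_aeval_eq_eval, RingHom.coe_coe, ← Polynomial.aeval_algHom_apply,
    Polynomial.coe_aeval_eq_eval]

end PolynomialFunctions

section Network

variable {σ : Type*} {m n : ℕ} (Q : Polynomial ℝ) {D : ℕ}

lemma applyLayer_mem_polyFunDegreeLE (W : Matrix (Fin m) (Fin n) ℝ) {v : (σ → ℝ) → Fin n → ℝ}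
    (hv : ∀ i, (fun x => v x i) ∈ polyFunDegreeLE σ ℝ D) (j : Fin m) :
    (fun x => applyLayer Q.eval W (v x) j) ∈ polyFunDegreeLE σ ℝ (Q.natDegree * D) := by
  refine polynomial_eval_comp_mem_polyFunDegreeLE Q (f := fun x => ∑ i, W j i * v x i) ?_
  convert Submodule.sum_smul_mem _ (W j) fun i (_ : i ∈ Finset.univ) => hv i
  simp

lemma iterLayers_mem_polyFunDegreeLE (Ws : Fin n → Matrix (Fin m) (Fin m) ℝ)
    {v : (σ → ℝ) → Fin m → ℝ} (hv : ∀ i, (fun x => v x i) ∈ polyFunDegreeLE σ ℝ D) (j : Fin m) :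
    (fun x => iterLayers Q.eval n Ws (v x) j) ∈ polyFunDegreeLE σ ℝ (Q.natDegree ^ n * D) := by
  induction n generalizing j with
  | zero => simpa [iterLayers] using hv j
  | succ n ih =>
    rw [pow_succ', mul_assoc]
    exact applyLayer_mem_polyFunDegreeLE Q (Ws (Fin.last n)) (ih fun i => Ws i.castSucc) j

lemma nnFun_mem_polyFunDegreeLE {d : ℕ} (a : Fin m → ℝ) (W1 : Matrix (Fin m) (Fin d) ℝ)
    (Ws : Fin n → Matrix (Fin m) (Fin m) ℝ) :
    nnFun Q.eval a W1 Ws ∈ polyFunDegreeLE (Fin d) ℝ (Q.natDegree ^ (n + 1)) := by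
  have hlayers : ∀ j, (fun x => iterLayers Q.eval n Ws (applyLayer Q.eval W1 x) j) ∈
      polyFunDegreeLE (Fin d) ℝ (Q.natDegree ^ (n + 1)) := by
    have hfirst := applyLayer_mem_polyFunDegreeLE Q W1 (coord_mem_polyFunDegreeLE (R := ℝ))
    simpa only [mul_one, ← pow_succ] using iterLayers_mem_polyFunDegreeLE Q Ws hfirst
  convert Submodule.sum_smul_mem _ a fun j (_ : j ∈ Finset.univ) => hlayers j
  simp [nnFun, funext_iff]

end Network

section TensorFeatures

variable {d : ℕ}

/-- The set `C = ∪_{t=0}^M F_{t,t}` of multi-indices of total degree at most `M`, written with the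
redundant bound `M` on each entry to make it a `Finset`. -/
def multiIndices (d M : ℕ) : Finset (Fin d → ℕ) :=
  (Fintype.piFinset fun _ : Fin d => Finset.range (M + 1)).filter fun α => ∑ i, α i ≤ M

lemma mem_multiIndices {M : ℕ} {α : Fin d → ℕ} : α ∈ multiIndices d M ↔ ∑ i, α i ≤ M := by
  simp only [multiIndices, Finset.mem_filter, Fintype.mem_piFinset, Finset.mem_range_succ_iff,
    and_iff_right_iff_imp]
  exact fun h i => (Finset.single_le_sum_of_canonicallyOrdered (Finset.mem_univ i)).trans h

lemma mem_Fst_self {t : ℕ} {α : Fin d → ℕ} : α ∈ Fst d t t ↔ ∑ i, α i = t := by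
  simp only [Fst, Finset.mem_filter, Fintype.mem_piFinset, Finset.mem_range_succ_iff,
    and_iff_right_iff_imp]
  exact fun h i => (Finset.single_le_sum_of_canonicallyOrdered (Finset.mem_univ i)).trans h.le

lemma card_Fst_self (d t : ℕ) : (Fst d t t).card = (d + t - 1).choose t := by
  have hcard : (Fst d t t).card = ((Finset.univ : Finset (Fin d)).finsuppAntidiag t).card :=
    Finset.card_equiv Finsupp.equivFunOnFinite.symm fun α => by simp [mem_Fst_self]
  rw [hcard, Finset.card_finsuppAntidiag_nat_eq_choose, Finset.card_univ, Fintype.card_fin]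

lemma card_multiIndices (d M : ℕ) :
    (multiIndices d M).card = ∑ t ∈ Finset.range (M + 1), (d + t - 1).choose t := by
  have hdegree : ((multiIndices d M : Finset _) : Set (Fin d → ℕ)).MapsTo (fun α => ∑ i, α i)
      (Finset.range (M + 1)) := fun α hα =>
    Finset.mem_coe.2 (Finset.mem_range_succ_iff.2 (mem_multiIndices.1 hα))
  rw [Finset.card_eq_sum_card_fiberwise hdegree]
  refine Finset.sum_congr rfl fun t ht => ?_
  rw [← card_Fst_self]
  congr 1
  ext α
  rw [Finset.mem_filter, mem_multiIndices, mem_Fst_self, and_iff_right_iff_imp]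
  exact fun h => h.trans_le (Finset.mem_range_succ_iff.1 ht)

lemma measurable_monom (α : Fin d → ℕ) : Measurable (monom α) := by
  unfold monom
  fun_prop

lemma exists_mvPolynomial_ne_zero_eval_eq_sum_monom {ι : Type*} [Fintype ι] {α : ι → Fin d → ℕ}
    (hα : Function.Injective α) {c : ι → ℝ} (hc : c ≠ 0) :
    ∃ p : MvPolynomial (Fin d) ℝ, p ≠ 0 ∧
      ∀ x, MvPolynomial.eval x p = ∑ j, c j * monom (α j) x := by
  refine ⟨∑ j, MvPolynomial.monomial (Finsupp.equivFunOnFinite.symm (α j)) (c j),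
    fun h => hc (funext fun j => ?_), fun x => ?_⟩
  · simpa [MvPolynomial.coeff_sum, MvPolynomial.coeff_monomial, hα.eq_iff] using
      congrArg (MvPolynomial.coeff (Finsupp.equivFunOnFinite.symm (α j))) h
  · simp [MvPolynomial.eval_monomial, monom, Finsupp.prod_fintype]

lemma ae_linearIndependent_monom {ι κ : Type*} [Fintype ι] [Fintype κ]
    (μ : κ → Measure (Fin d → ℝ)) [∀ i, IsProbabilityMeasure (μ i)]
    (hμ : ∀ i, ∀ p : MvPolynomial (Fin d) ℝ, p ≠ 0 → ∀ᵐ x ∂μ i, MvPolynomial.eval x p ≠ 0)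
    {α : ι → Fin d → ℕ} (hα : Function.Injective α) (hcard : Fintype.card ι ≤ Fintype.card κ) :
    ∀ᵐ X ∂Measure.pi μ, LinearIndependent ℝ fun j i => monom (α j) (X i) := by
  refine ae_linearIndependent_of_card_le μ hcard (fun j => measurable_monom (α j)) fun i c hc => ?_
  obtain ⟨p, hp, hpeval⟩ := exists_mvPolynomial_ne_zero_eval_eq_sum_monom hα hc
  simpa only [hpeval] using hμ i p hp

end TensorFeatures

section TensorOLS

variable {d M : ℕ} {κ : Type*}

/-- The tensor predictor `x ↦ ∑_{α ∈ C} q_α x_α` with coefficients `q`, where `C` is the set of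
multi-indices of total degree at most `M`. The values of `q` off `C` are ignored. -/
def tensorPredictor (M : ℕ) (q : (Fin d → ℕ) → ℝ) (x : Fin d → ℝ) : ℝ :=
  ∑ α ∈ multiIndices d M, q α * monom α x

lemma exists_tensorPredictor_eq {f : (Fin d → ℝ) → ℝ} (hf : f ∈ polyFunDegreeLE (Fin d) ℝ M) :
    ∃ q, tensorPredictor M q = f := by
  obtain ⟨p, hp, hpf⟩ := mem_polyFunDegreeLE.1 hf
  refine ⟨fun α => p.coeff (Finsupp.equivFunOnFinite.symm α), funext fun x => ?_⟩
  rw [← hpf, MvPolynomial.eval_eq', tensorPredictor]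
  refine (Finset.sum_of_injOn DFunLike.coe DFunLike.coe_injective.injOn (fun s hs => ?_)
    (fun α _ hα => ?_) fun s _ => ?_).symm
  · rw [Finset.mem_coe, mem_multiIndices, ← Finsupp.sum_fintype s (fun _ e => e) fun _ => rfl]
    exact (MvPolynomial.le_totalDegree hs).trans hp
  · rw [MvPolynomial.notMem_support_iff.1 fun h => hα ⟨_, h, rfl⟩, zero_mul]
  · rw [Finsupp.equivFunOnFinite_symm_coe, monom]

lemma tensorPredictor_eq_of_linearIndepOn {X : κ → Fin d → ℝ}
    (hX : LinearIndepOn ℝ (fun α i => monom α (X i)) (multiIndices d M : Set (Fin d → ℕ)))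
    {q q₀ : (Fin d → ℕ) → ℝ} (h : ∀ i, tensorPredictor M q (X i) = tensorPredictor M q₀ (X i)) :
    tensorPredictor M q = tensorPredictor M q₀ := by
  have hcoeff : ∀ α ∈ multiIndices d M, q α = q₀ α :=
    linearIndepOn_finset_iffₛ.1 hX q q₀ (funext fun i => by simpa [tensorPredictor] using h i)
  exact funext fun x => Finset.sum_congr rfl fun α hα => by rw [hcoeff α hα]

variable [Fintype κ]

/-- `q` solves the tensor least-squares problem with data `(X i, Y i)`, `i : κ`. The solution need
not be unique. -/
def IsTensorOLS (M : ℕ) (X : κ → Fin d → ℝ) (Y : κ → ℝ) (q : (Fin d → ℕ) → ℝ) : Prop :=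
  ∀ q', ∑ i, (Y i - tensorPredictor M q (X i)) ^ 2 ≤ ∑ i, (Y i - tensorPredictor M q' (X i)) ^ 2

lemma IsTensorOLS.interpolates {X : κ → Fin d → ℝ} {q q₀ : (Fin d → ℕ) → ℝ}
    (h : IsTensorOLS M X (fun i => tensorPredictor M q₀ (X i)) q) (i : κ) :
    tensorPredictor M q (X i) = tensorPredictor M q₀ (X i) := by
  have hrisk : ∑ i, (tensorPredictor M q₀ (X i) - tensorPredictor M q (X i)) ^ 2 ≤ 0 := by
    simpa using h q₀
  have hzero := (Finset.sum_eq_zero_iff_of_nonneg fun i _ => sq_nonneg _).1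
    (hrisk.antisymm (Finset.sum_nonneg fun i _ => sq_nonneg _)) i (Finset.mem_univ i)
  exact (sub_eq_zero.1 (pow_eq_zero_iff two_ne_zero |>.1 hzero)).symm

end TensorOLS

theorem polynomial_network_exact_recovery_continuous_general
    (d m L N k : ℕ) (hL : 1 ≤ L) (Q : Polynomial ℝ) (hQ : Q.natDegree = k)
    (ν : Measure (Fin d → ℝ)) [IsProbabilityMeasure ν]
    (hν : ∀ p : MvPolynomial (Fin d) ℝ, p ≠ 0 → ∀ᵐ x ∂ν, MvPolynomial.eval x p ≠ 0)
    (a : Fin m → ℝ) (W1 : Matrix (Fin m) (Fin d) ℝ)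
    (Ws : Fin (L - 1) → Matrix (Fin m) (Fin m) ℝ)
    (hN : N ≥ ∑ t ∈ Finset.range (k ^ L + 1), (d + t - 1).choose t) :
    ∀ᵐ X ∂Measure.pi fun _ : Fin N => ν, ∀ q,
      IsTensorOLS (k ^ L) X (fun i => nnFun Q.eval a W1 Ws (X i)) q →
        ∀ x, tensorPredictor (k ^ L) q x = nnFun Q.eval a W1 Ws x := by
  have hpoly := nnFun_mem_polyFunDegreeLE Q a W1 Ws
  rw [hQ, Nat.sub_add_cancel hL] at hpoly
  obtain ⟨q₀, hq₀⟩ := exists_tensorPredictor_eq hpoly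
  have hcard : Fintype.card (multiIndices d (k ^ L)) ≤ Fintype.card (Fin N) := by
    rwa [Fintype.card_coe, Fintype.card_fin, card_multiIndices]
  filter_upwards [ae_linearIndependent_monom _ (fun _ => hν) Subtype.val_injective hcard]
    with X hX q hq x
  rw [← hq₀] at hq ⊢
  exact congrFun (tensorPredictor_eq_of_linearIndepOn hX hq.interpolates) x

/-- For a polynomial activation of degree `k` and i.i.d. jointly continuous
inputs, as soon as `N ≥ Σ_{t=0}^{k^L} C(d+t−1, t)`, with probability one any tensor-OLS
minimizer over all multi-indices of total degree at most `k^L` recovers the depth-`L`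
teacher network exactly. -/
theorem polynomial_network_exact_recovery_continuous
    (d m L N k : ℕ) (hL : 1 ≤ L)
    (Q : Polynomial ℝ) (hQ : Q.natDegree = k)
    (ν : Measure (Fin d → ℝ)) (hν : IsProbabilityMeasure ν)
    (hac : ν ≪ (volume : Measure (Fin d → ℝ)))
    (a : Fin m → ℝ) (W1 : Matrix (Fin m) (Fin d) ℝ)
    (Ws : Fin (L - 1) → Matrix (Fin m) (Fin m) ℝ)
    (hN : N ≥ ∑ t ∈ Finset.range (k ^ L + 1), (d + t - 1).choose t) :
    (Measure.pi fun _ : Fin N => ν)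
      {X | ∀ qh : (Fin d → ℕ) → ℝ,
        (∀ q : (Fin d → ℕ) → ℝ,
          ∑ i : Fin N, (nnFun Q.eval a W1 Ws (X i)
              - ∑ α ∈ (Fintype.piFinset fun _ : Fin d => Finset.range (k ^ L + 1)).filter
                  (fun α => ∑ i, α i ≤ k ^ L), qh α * monom α (X i)) ^ 2
            ≤ ∑ i : Fin N, (nnFun Q.eval a W1 Ws (X i)
              - ∑ α ∈ (Fintype.piFinset fun _ : Fin d => Finset.range (k ^ L + 1)).filter
                  (fun α => ∑ i, α i ≤ k ^ L), q α * monom α (X i)) ^ 2) →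
        ∀ x : Fin d → ℝ,
          ∑ α ∈ (Fintype.piFinset fun _ : Fin d => Finset.range (k ^ L + 1)).filter
              (fun α => ∑ i, α i ≤ k ^ L), qh α * monom α x
            = nnFun Q.eval a W1 Ws x} = 1 := by
  have hpoly : ∀ p : MvPolynomial (Fin d) ℝ, p ≠ 0 → ∀ᵐ x ∂ν, MvPolynomial.eval x p ≠ 0 :=
    fun _ hp => hac.ae_le (ae_mvPolynomial_eval_ne_zero _ hp)
  have hrecovery :=
    polynomial_network_exact_recovery_continuous_general d m L N k hL Q hQ ν hpoly a W1 Ws hN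
  exact (measure_congr (Filter.eventuallyEq_univ.2 hrecovery)).trans measure_univ

end
end

section
/- Let σ be an admissible activation with order of approximation φ_σ, let X^(1),…,X^(N) be i.i.d. samples from an admissible distribution P^⊗d on [-1,1]^d, and let Y_i = f_{N1}(W*, X^(i)) be labels from an L-layer teacher network N1 of width m* whose weights satisfy ‖a*‖_{ℓ1} ≤ 1 and ‖W*_{p,j}‖_{ℓ1} ≤ 1 for all layers p and rows j. Let N2 be a student network of depth L and width m̂ ≥ m* whose weights Ŵ satisfy ‖â‖_{ℓ1} ≤ 1 and ‖Ŵ_{k,j}‖_{ℓ1} ≤ 1 for all k ∈ [L] and rows j, and which interpolates the data: f_{N2}(Ŵ, X^(i)) = Y_i for all i ∈ [N]. Fix ε > 0 and set M = (φ_σ(√(ε/16L²)))^L. Then there is an absolute constant c > 0 such that, provided N ≥ 2^{24} ε^{−6} exp(96 log(d) · M) · C(P, M)^{18}, with probability at least 1 − exp(−c N^{1/4}) over the training samples, E[(f_{N1}(W*, X) − f_{N2}(Ŵ, X))²] ≤ ε, where the expectation is over a fresh sample X from P^⊗d. -/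
open MeasureTheory Polynomial Matrix
open scoped Classical

noncomputable section

/-!
A network with unit weights is bounded by `1` on the unit ball of `ℓ∞`, whatever its width, and
replacing `σ` by a polynomial within `δ` of it moves the output by at most `L δ`. Hence all students
lie within `L δ` of the unit ball of the polynomials of degree `r ^ L` in `d` variables, a space of
dimension at most `(d + 1) ^ r ^ L`, and a volume comparison bounds the sup-norm packing number of
the students by a number `n`.

A fixed bounded function with mean square above `ε` is below `√(ε / 2)` at a random point with
probability at most `exp (-ε / 8)`, by Markov's inequality, hence at `N` independent points with
probability at most `exp (-N ε / 8)`. Apply this to teacher minus student, for the students of a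
net of those with error above `ε`: if such a student interpolates the sample, then the nearest
student of the net is close to the teacher at all sample points. The union bound leaves
`n exp (-N ε / 8)`, which the sample size makes at most `exp (-N ^ (1 / 4))`. Finally
`C(P, M) ≥ 1`, because the Hankel determinants of the moments of `P` are positive.
-/

section Packing

open Metric Module Set
open scoped NNReal ENNReal

lemma coe_lt_edist_iff {X : Type*} [PseudoMetricSpace X] {s : ℝ≥0} {x y : X} :
    (s : ℝ≥0∞) < edist x y ↔ (s : ℝ) < dist x y := by
  rw [edist_nndist, ENNReal.coe_lt_coe, ← NNReal.coe_lt_coe, coe_nndist]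

lemma packingNumber_add_le_of_dist_le {X Y : Type*} [PseudoMetricSpace X] [PseudoMetricSpace Y]
    {A : Set X} {B : Set Y} {φ : X → Y} (hφ : MapsTo φ A B) {s c : ℝ≥0}
    (h : ∀ x ∈ A, ∀ y ∈ A, dist x y ≤ dist (φ x) (φ y) + c) :
    packingNumber (s + c) A ≤ packingNumber s B := by
  refine iSup_le fun C => iSup₂_le fun hCA hC => ?_
  have hsep : ∀ x ∈ C, ∀ y ∈ C, x ≠ y → (s : ℝ≥0∞) < edist (φ x) (φ y) := fun x hx y hy hxy => by
    have hxy : ((s + c : ℝ≥0) : ℝ) < dist x y := coe_lt_edist_iff.1 (hC hx hy hxy)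
    rw [NNReal.coe_add] at hxy
    exact coe_lt_edist_iff.2 (by linarith [h x (hCA hx) y (hCA hy)])
  have hinj : InjOn φ C := fun x hx y hy hxy => by
    by_contra hne
    simpa [hxy] using hsep x hx y hy hne
  rw [← hinj.encard_image]
  refine IsSeparated.encard_le_packingNumber ((image_mono hCA).trans hφ.image_subset) ?_
  rintro _ ⟨x, hx, rfl⟩ _ ⟨y, hy, rfl⟩ hxy
  exact hsep x hx y hy fun e => hxy (e ▸ rfl)

lemma packingNumber_mono_set {X : Type*} [PseudoEMetricSpace X] {A B : Set X} (h : A ⊆ B)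
    (s : ℝ≥0) : packingNumber s A ≤ packingNumber s B :=
  iSup_le fun _ => iSup₂_le fun hCA hC => hC.encard_le_packingNumber (hCA.trans h)

lemma exists_finset_dist_le_of_coveringNumber_le {X : Type*} [PseudoMetricSpace X] {A : Set X}
    {r : ℝ≥0} {n : ℕ} (h : coveringNumber r A ≤ n) :
    ∃ T : Finset X, ↑T ⊆ A ∧ T.card ≤ n ∧ ∀ x ∈ A, ∃ t ∈ T, dist x t ≤ r := by
  have htop := ne_top_of_le_ne_top (ENat.natCast_ne_top n) h
  have hfin := finite_minimalCover (ε := r) (A := A)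
  rw [← encard_minimalCover htop, hfin.encard_eq_coe_toFinset_card] at h
  refine ⟨hfin.toFinset, by simpa using minimalCover_subset, by exact_mod_cast h, fun x hx => ?_⟩
  obtain ⟨t, ht, hxt⟩ := isCover_minimalCover htop hx
  exact ⟨t, hfin.mem_toFinset.2 ht, by exact_mod_cast edist_le_coe.1 hxt⟩

section FiniteDimensional

variable {E : Type*} [NormedAddCommGroup E] [NormedSpace ℝ E] [FiniteDimensional ℝ E]

-- Disjoint balls of radius `s / 2` inside a ball of radius `R + s / 2`: compare volumes.
lemma card_le_of_isSeparated_of_subset_closedBall {R : ℝ} (hR : 0 ≤ R) {s : ℝ≥0}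
    (hs : 0 < s) {C : Finset E} (hCR : (C : Set E) ⊆ closedBall 0 R)
    (hC : IsSeparated s (C : Set E)) :
    (C.card : ℝ) ≤ (1 + 2 * R / s) ^ finrank ℝ E := by
  borelize E
  let μ : Measure E := Measure.addHaar
  have hs2 : (0 : ℝ) < s / 2 := by positivity
  have hdisj : (C : Set E).PairwiseDisjoint fun c => ball c (s / 2 : ℝ) := fun c hc d hd hcd =>
    ball_disjoint_ball <| by linarith [coe_lt_edist_iff.1 (hC hc hd hcd)]
  have hsub : ⋃ c ∈ C, ball c (s / 2 : ℝ) ⊆ ball (0 : E) (R + s / 2) :=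
    iUnion₂_subset fun c hc => ball_subset_ball' <| by linarith [mem_closedBall.1 (hCR hc)]
  have hvol : (C.card * ENNReal.ofReal ((s / 2 : ℝ) ^ finrank ℝ E)) * μ (ball 0 1) ≤
      ENNReal.ofReal ((R + s / 2) ^ finrank ℝ E) * μ (ball 0 1) := calc
    _ = μ (⋃ c ∈ C, ball c (s / 2 : ℝ)) := by
      rw [measure_biUnion_finset hdisj fun _ _ => measurableSet_ball]
      simp only [μ.addHaar_ball_of_pos _ hs2, Finset.sum_const, nsmul_eq_mul, mul_assoc]
    _ ≤ μ (ball 0 (R + s / 2)) := measure_mono hsub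
    _ = _ := μ.addHaar_ball_of_pos _ (by positivity)
  have hcard : (C.card : ℝ) * (s / 2 : ℝ) ^ finrank ℝ E ≤ (R + s / 2) ^ finrank ℝ E := by
    have := ENNReal.toReal_le_of_le_ofReal (by positivity) <|
      (ENNReal.mul_le_mul_iff_left (measure_ball_pos μ _ one_pos).ne' measure_ball_lt_top.ne).1 hvol
    simpa [ENNReal.toReal_mul, hs2.le] using this
  rw [← le_div_iff₀ (by positivity), ← div_pow] at hcard
  have hratio : (R + s / 2) / (s / 2) = 1 + 2 * R / s := by field_simp; ring
  exact hratio ▸ hcard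

lemma packingNumber_closedBall_le {R : ℝ} (hR : 0 ≤ R) {s : ℝ≥0} (hs : 0 < s) :
    packingNumber s (closedBall (0 : E) R) ≤ ⌊(1 + 2 * R / s) ^ finrank ℝ E⌋₊ := by
  refine iSup_le fun C => iSup₂_le fun hCR hC => ?_
  by_contra! hlt
  obtain ⟨D, hDC, hD⟩ := Set.exists_subset_encard_eq (Order.add_one_le_of_lt hlt)
  have hfin : D.Finite := Set.finite_of_encard_eq_coe hD
  lift D to Finset E using hfin
  rw [encard_coe_eq_coe_finsetCard] at hD
  have := Nat.le_floor
    (card_le_of_isSeparated_of_subset_closedBall hR hs (hDC.trans hCR) (hC.subset hDC))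
  norm_cast at hD
  omega

end FiniteDimensional

lemma packingNumber_le_of_near_submodule {E : Type*} [NormedAddCommGroup E] [NormedSpace ℝ E]
    (V : Submodule ℝ E) [FiniteDimensional ℝ V] {F : Set E} {R : ℝ} (hR : 0 ≤ R) {s c : ℝ≥0}
    (hs : 0 < s) (hF : ∀ f ∈ F, ∃ q ∈ V, ‖q‖ ≤ R ∧ ‖f - q‖ ≤ c) :
    packingNumber (s + 2 * c) F ≤ ⌊(1 + 2 * R / s) ^ finrank ℝ V⌋₊ := by
  choose! φ hφV hφR hφ using hF
  have hmaps : MapsTo (fun f => if h : φ f ∈ V then (⟨φ f, h⟩ : V) else 0) F (closedBall 0 R) :=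
    fun f hf => by simpa [hφV f hf] using hφR f hf
  refine (packingNumber_add_le_of_dist_le hmaps fun f hf g hg => ?_).trans
    (packingNumber_closedBall_le hR hs)
  simp only [hφV f hf, hφV g hg, dite_true]
  rw [Subtype.dist_eq, NNReal.coe_mul, NNReal.coe_ofNat]
  have := dist_triangle4 f (φ f) (φ g) g
  rw [dist_eq_norm f (φ f), dist_comm (φ g), dist_eq_norm g (φ g)] at this
  linarith [hφ f hf, hφ g hg]

lemma packingNumber_lipschitz_le {K : Type*} [PseudoMetricSpace K] [CompactSpace K]
    {F : Set C(K, ℝ)} {R : ℝ} (hR : 0 ≤ R) {k r s : ℝ≥0} (hs : 0 < s)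
    (hF : ∀ f ∈ F, LipschitzWith k f ∧ ‖f‖ ≤ R) {n : ℕ}
    (hn : coveringNumber r (univ : Set K) ≤ n) :
    packingNumber (s + 2 * (k * r)) F ≤ ⌊(1 + 2 * R / s) ^ n⌋₊ := by
  obtain ⟨T, -, hTn, hT⟩ := exists_finset_dist_le_of_coveringNumber_le hn
  have hmaps : MapsTo (fun (f : C(K, ℝ)) (t : T) => f t.1) F (closedBall 0 R) :=
    fun f hf => mem_closedBall_zero_iff.2 <| (pi_norm_le_iff_of_nonneg hR).2 fun t =>
      (ContinuousMap.norm_coe_le_norm f t.1).trans (hF f hf).2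
  have hdist : ∀ f ∈ F, ∀ g ∈ F,
      dist f g ≤ dist (fun t : T => f t.1) (fun t : T => g t.1) + 2 * (k * r) := fun f hf g hg => by
    refine (ContinuousMap.dist_le (by positivity)).2 fun x => ?_
    obtain ⟨t, ht, hxt⟩ := hT x (mem_univ x)
    have hk : (k : ℝ) * dist x t ≤ k * r := by gcongr
    have hft := ((hF f hf).1.dist_le_mul x t).trans hk
    have hgt := ((hF g hg).1.dist_le_mul x t).trans hk
    have hnode := dist_le_pi_dist (fun t : T => f t.1) (fun t : T => g t.1) ⟨t, ht⟩
    have := dist_triangle4 (f x) (f t) (g t) (g x)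
    rw [dist_comm (g t)] at this
    linarith
  calc packingNumber (s + 2 * (k * r)) F ≤ packingNumber s (closedBall (0 : T → ℝ) R) :=
        packingNumber_add_le_of_dist_le hmaps fun f hf g hg => by
          exact_mod_cast hdist f hf g hg
    _ ≤ ⌊(1 + 2 * R / s) ^ T.card⌋₊ := by
        simpa using packingNumber_closedBall_le (E := T → ℝ) hR hs
    _ ≤ ⌊(1 + 2 * R / s) ^ n⌋₊ := by
        gcongr
        linarith [show 0 ≤ 2 * R / s by positivity]

end Packing

section Interpolation

open Metric Set
open scoped NNReal

lemma measure_abs_le_le_exp {Ω : Type*} [MeasurableSpace Ω] {μ : Measure Ω}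
    [IsProbabilityMeasure μ] {h : Ω → ℝ} {B ε ρ : ℝ} (hh : AEMeasurable h μ)
    (hB : ∀ᵐ x ∂μ, |h x| ≤ B) (hε : ε < ∫ x, h x ^ 2 ∂μ) (hρ : 2 * ρ ^ 2 ≤ ε) :
    μ {x | |h x| ≤ ρ} ≤ ENNReal.ofReal (Real.exp (-(ε / (2 * B ^ 2)))) := by
  have hsq : ∀ᵐ x ∂μ, h x ^ 2 ≤ B ^ 2 :=
    hB.mono fun x hx => sq_le_sq' (abs_le.1 hx).1 (abs_le.1 hx).2
  have hint : Integrable (fun x => h x ^ 2) μ :=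
    Integrable.of_bound (hh.pow_const 2).aestronglyMeasurable (B ^ 2)
      (hsq.mono fun x hx => by simpa using hx)
  have hεB : ε < B ^ 2 := hε.trans_le <| by
    simpa using integral_mono_ae hint (integrable_const (B ^ 2)) hsq
  have hmarkov : (B ^ 2 - ρ ^ 2) * μ.real {x | B ^ 2 - ρ ^ 2 ≤ B ^ 2 - h x ^ 2} ≤
      B ^ 2 - ∫ x, h x ^ 2 ∂μ := by
    refine (mul_meas_ge_le_integral_of_nonneg (hsq.mono fun x hx => sub_nonneg.2 hx)
      ((integrable_const _).sub hint) _).trans_eq ?_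
    simp [integral_sub (integrable_const _) hint]
  have hsub : {x | |h x| ≤ ρ} ⊆ {x | B ^ 2 - ρ ^ 2 ≤ B ^ 2 - h x ^ 2} := fun x hx =>
    sub_le_sub_left (sq_le_sq' (neg_le_of_abs_le hx) (le_of_abs_le hx)) (B ^ 2)
  have hε0 : 0 ≤ ε := by linarith [sq_nonneg ρ]
  rw [← ofReal_measureReal]
  refine ENNReal.ofReal_le_ofReal ?_
  calc μ.real {x | |h x| ≤ ρ} ≤ (B ^ 2 - ε) / (B ^ 2 - ε / 2) := by
        rw [le_div_iff₀ (by linarith), mul_comm]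
        exact (mul_le_mul (by linarith) (measureReal_mono hsub) measureReal_nonneg
          (by linarith)).trans (hmarkov.trans (by linarith))
    _ = 1 - ε / 2 / (B ^ 2 - ε / 2) := by
        rw [one_sub_div (by linarith)]
        ring
    _ ≤ 1 - ε / 2 / B ^ 2 := by
        gcongr
        · linarith
        · linarith
    _ = 1 - ε / (2 * B ^ 2) := by rw [div_div]
    _ ≤ Real.exp (-(ε / (2 * B ^ 2))) := by linarith [Real.add_one_le_exp (-(ε / (2 * B ^ 2)))]

variable {K : Type*} [TopologicalSpace K] [CompactSpace K] [MeasurableSpace K]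
  [OpensMeasurableSpace K] {ι : Type*} [Fintype ι]

lemma measure_pi_abs_sub_le_le_exp (μ : Measure K) [IsProbabilityMeasure μ] {f : C(K, ℝ)}
    (hf : ‖f‖ ≤ 1) {g : K → ℝ} (hg : AEMeasurable g μ) (hg1 : ∀ᵐ x ∂μ, |g x| ≤ 1) {ε ρ : ℝ}
    (hε : ε < ∫ x, (g x - f x) ^ 2 ∂μ) (hρ : 2 * ρ ^ 2 ≤ ε) :
    Measure.pi (fun _ : ι => μ) {X | ∀ i, |g (X i) - f (X i)| ≤ ρ} ≤
      ENNReal.ofReal (Real.exp (-(Fintype.card ι * (ε / 8)))) := by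
  have hB : ∀ᵐ x ∂μ, |g x - f x| ≤ 2 := hg1.mono fun x hx => by
    have := (f.norm_coe_le_norm x).trans hf
    rw [Real.norm_eq_abs] at this
    linarith [abs_sub (g x) (f x)]
  have hone := measure_abs_le_le_exp (hg.sub f.continuous.measurable.aemeasurable) hB hε hρ
  calc Measure.pi (fun _ : ι => μ) {X | ∀ i, |g (X i) - f (X i)| ≤ ρ}
      = Measure.pi (fun _ : ι => μ) (univ.pi fun _ => {x | |g x - f x| ≤ ρ}) := by
        congr 1; ext X; simp
    _ = μ {x | |g x - f x| ≤ ρ} ^ Fintype.card ι := by simp [Measure.pi_pi]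
    _ ≤ ENNReal.ofReal (Real.exp (-(ε / (2 * 2 ^ 2)))) ^ Fintype.card ι := by gcongr; exact hone
    _ = _ := by
        rw [← ENNReal.ofReal_pow (Real.exp_pos _).le, ← Real.exp_nat_mul]
        congr 2; ring

theorem measure_pi_exists_interpolant_le (μ : Measure K) [IsProbabilityMeasure μ]
    {F : Set C(K, ℝ)} (hF : F ⊆ closedBall 0 1) {g : K → ℝ} (hg : AEMeasurable g μ)
    (hg1 : ∀ᵐ x ∂μ, |g x| ≤ 1) {ε : ℝ} {ρ : ℝ≥0} (hρ : 2 * (ρ : ℝ) ^ 2 ≤ ε) {n : ℕ}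
    (hn : packingNumber ρ F ≤ n) :
    Measure.pi (fun _ : ι => μ)
        {X | ∃ f ∈ F, (∀ i, f (X i) = g (X i)) ∧ ε < ∫ x, (g x - f x) ^ 2 ∂μ} ≤
      n * ENNReal.ofReal (Real.exp (-(Fintype.card ι * (ε / 8)))) := by
  set bad : Set C(K, ℝ) := {f ∈ F | ε < ∫ x, (g x - f x) ^ 2 ∂μ}
  -- The net is taken inside `bad` itself, so that its centres are bad as well.
  have hcov : coveringNumber ρ bad ≤ n :=
    (coveringNumber_le_packingNumber ρ bad).trans
      ((packingNumber_mono_set (sep_subset _ _) ρ).trans hn)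
  obtain ⟨T, hTbad, hTn, hT⟩ := exists_finset_dist_le_of_coveringNumber_le hcov
  have hsub : {X : ι → K | ∃ f ∈ F, (∀ i, f (X i) = g (X i)) ∧ ε < ∫ x, (g x - f x) ^ 2 ∂μ} ⊆
      ⋃ c ∈ T, {X | ∀ i, |g (X i) - c (X i)| ≤ ρ} := by
    rintro X ⟨f, hfF, hfit, hfε⟩
    obtain ⟨c, hc, hfc⟩ := hT f ⟨hfF, hfε⟩
    refine mem_iUnion₂.2 ⟨c, hc, fun i => ?_⟩
    rw [← hfit i]
    exact (ContinuousMap.dist_apply_le_dist (X i)).trans hfc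
  calc _ ≤ ∑ c ∈ T, Measure.pi (fun _ : ι => μ) {X | ∀ i, |g (X i) - c (X i)| ≤ ρ} :=
        (measure_mono hsub).trans (measure_biUnion_finset_le _ _)
    _ ≤ ∑ _c ∈ T, ENNReal.ofReal (Real.exp (-(Fintype.card ι * (ε / 8)))) :=
        Finset.sum_le_sum fun c hc => measure_pi_abs_sub_le_le_exp μ
          (mem_closedBall_zero_iff.1 (hF (hTbad hc).1)) hg hg1 (hTbad hc).2 hρ
    _ ≤ _ := by
        rw [Finset.sum_const, nsmul_eq_mul]
        gcongr

end Interpolation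

section ProbabilityMeasure

open Set

lemma exists_map_subtype_val_eq {X : Type*} [MeasurableSpace X] {μ : Measure X}
    [IsProbabilityMeasure μ] {s : Set X} (hs : MeasurableSet s) (h : ∀ᵐ x ∂μ, x ∈ s) :
    ∃ ν : Measure s, IsProbabilityMeasure ν ∧ ν.map Subtype.val = μ := by
  have hmap : (μ.comap (Subtype.val : s → X)).map Subtype.val = μ := by
    rw [map_comap_subtype_coe hs, Measure.restrict_eq_self_of_ae_mem h]
  refine ⟨_, ?_, hmap⟩
  rwa [← Measure.isProbabilityMeasure_map_iff measurable_subtype_coe.aemeasurable, hmap]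

lemma ofReal_one_sub_le_measure_of_compl_le {Ω : Type*} [MeasurableSpace Ω] {μ : Measure Ω}
    [IsProbabilityMeasure μ] {s : Set Ω} {b : ℝ} (hb : 0 ≤ b) (h : μ sᶜ ≤ ENNReal.ofReal b) :
    ENNReal.ofReal (1 - b) ≤ μ s := by
  rw [ENNReal.ofReal_sub _ hb, ENNReal.ofReal_one, tsub_le_iff_right, ← measure_univ (μ := μ),
    ← union_compl_self s]
  exact (measure_union_le _ _).trans (by gcongr)

lemma measure_pi_preimage_comp_le {ι X Y : Type*} [Fintype ι] [MeasurableSpace X]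
    [MeasurableSpace Y] {ν : Measure X} {f : X → Y} (hf : Measurable f) [SigmaFinite (ν.map f)]
    (S : Set (ι → Y)) :
    Measure.pi (fun _ => ν) {x : ι → X | f ∘ x ∈ S} ≤ Measure.pi (fun _ => ν.map f) S := by
  have : SigmaFinite ν := SigmaFinite.of_map ν hf.aemeasurable ‹_›
  rw [← Measure.pi_map_pi fun _ => hf.aemeasurable]
  exact Measure.le_map_apply
    (measurable_pi_lambda _ fun i => hf.comp (measurable_pi_apply i)).aemeasurable S

lemma integral_sq_sub_le_four {Ω : Type*} [MeasurableSpace Ω] {μ : Measure Ω}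
    [IsProbabilityMeasure μ] {g h : Ω → ℝ} (hg : ∀ᵐ x ∂μ, |g x| ≤ 1) (hh : ∀ᵐ x ∂μ, |h x| ≤ 1) :
    ∫ x, (g x - h x) ^ 2 ∂μ ≤ 4 := by
  have hsq : ∀ᵐ x ∂μ, (g x - h x) ^ 2 ≤ 4 := by
    filter_upwards [hg, hh] with x hgx hhx
    nlinarith [abs_le.1 hgx, abs_le.1 hhx]
  simpa using integral_mono_of_nonneg (.of_forall fun x => sq_nonneg _) (integrable_const 4) hsq

end ProbabilityMeasure

section Networks

open Metric Set

lemma abs_sum_mul_le_norm {ι : Type*} [Fintype ι] {w : ι → ℝ} (hw : ∑ i, |w i| ≤ 1)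
    (z : ι → ℝ) : |∑ i, w i * z i| ≤ ‖z‖ := calc
  |∑ i, w i * z i| ≤ ∑ i, |w i| * ‖z‖ := by
    refine (Finset.abs_sum_le_sum_abs _ _).trans (Finset.sum_le_sum fun i _ => ?_)
    rw [abs_mul]
    gcongr
    exact norm_le_pi_norm z i
  _ ≤ ‖z‖ := by
    rw [← Finset.sum_mul]
    exact mul_le_of_le_one_left (norm_nonneg z) hw

lemma sum_mul_mem_Icc {ι : Type*} [Fintype ι] {w : ι → ℝ} (hw : ∑ i, |w i| ≤ 1) {z : ι → ℝ}
    (hz : ‖z‖ ≤ 1) : ∑ i, w i * z i ∈ Icc (-1 : ℝ) 1 :=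
  abs_le.1 ((abs_sum_mul_le_norm hw z).trans hz)

lemma abs_sum_mul_sub_sum_mul_le {ι : Type*} [Fintype ι] {w : ι → ℝ} (hw : ∑ i, |w i| ≤ 1)
    (z z' : ι → ℝ) : |∑ i, w i * z i - ∑ i, w i * z' i| ≤ ‖z - z'‖ := by
  simpa [mul_sub] using abs_sum_mul_le_norm hw (z - z')

/-- The weight bounds of the theorem: the output vector and every row of every weight matrix
lie in the unit `ℓ¹` ball. -/
structure HasUnitWeights {d m n : ℕ} (a : Fin m → ℝ) (W1 : Matrix (Fin m) (Fin d) ℝ)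
    (Ws : Fin n → Matrix (Fin m) (Fin m) ℝ) : Prop where
  output : ∑ j, |a j| ≤ 1
  input : ∀ j, ∑ i, |W1 j i| ≤ 1
  hidden : ∀ p j, ∑ i, |Ws p j i| ≤ 1

variable {σ τ : ℝ → ℝ} {d m n : ℕ}

lemma norm_applyLayer_le_one (hσ : MapsTo σ (Icc (-1) 1) (Icc (-1) 1))
    {W : Matrix (Fin m) (Fin n) ℝ} (hW : ∀ j, ∑ i, |W j i| ≤ 1) {v : Fin n → ℝ} (hv : ‖v‖ ≤ 1) :
    ‖applyLayer σ W v‖ ≤ 1 :=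
  (pi_norm_le_iff_of_nonneg zero_le_one).2 fun j => abs_le.2 (hσ (sum_mul_mem_Icc (hW j) hv))

lemma norm_iterLayers_le_one (hσ : MapsTo σ (Icc (-1) 1) (Icc (-1) 1)) {v : Fin m → ℝ}
    (hv : ‖v‖ ≤ 1) : ∀ {n : ℕ} {Ws : Fin n → Matrix (Fin m) (Fin m) ℝ},
    (∀ p j, ∑ i, |Ws p j i| ≤ 1) → ‖iterLayers σ n Ws v‖ ≤ 1
  | 0, _, _ => hv
  | _ + 1, _, hWs => norm_applyLayer_le_one hσ (hWs _) (norm_iterLayers_le_one hσ hv fun _ => hWs _)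

lemma abs_nnFun_le_one (hσ : MapsTo σ (Icc (-1) 1) (Icc (-1) 1)) {a : Fin m → ℝ}
    {W1 : Matrix (Fin m) (Fin d) ℝ} {Ws : Fin n → Matrix (Fin m) (Fin m) ℝ}
    (hW : HasUnitWeights a W1 Ws) {x : Fin d → ℝ} (hx : ‖x‖ ≤ 1) : |nnFun σ a W1 Ws x| ≤ 1 :=
  (abs_sum_mul_le_norm hW.output _).trans
    (norm_iterLayers_le_one hσ (norm_applyLayer_le_one hσ hW.input hx) hW.hidden)

section Perturbation

variable (hσ : MapsTo σ (Icc (-1) 1) (Icc (-1) 1)) (hτ : MapsTo τ (Icc (-1) 1) (Icc (-1) 1))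
  (hlip : LipschitzOnWith 1 σ (Icc (-1) 1)) {δ : ℝ} (hτσ : ∀ x ∈ Icc (-1 : ℝ) 1, |τ x - σ x| ≤ δ)
include hlip hτσ

lemma norm_applyLayer_sub_le {W : Matrix (Fin m) (Fin n) ℝ} (hW : ∀ j, ∑ i, |W j i| ≤ 1)
    {v v' : Fin n → ℝ} (hv : ‖v‖ ≤ 1) (hv' : ‖v'‖ ≤ 1) :
    ‖applyLayer τ W v - applyLayer σ W v'‖ ≤ ‖v - v'‖ + δ := by
  have hδ : 0 ≤ δ := (abs_nonneg _).trans (hτσ 0 (by simp))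
  refine (pi_norm_le_iff_of_nonneg (by positivity)).2 fun j => ?_
  have hs := sum_mul_mem_Icc (hW j) hv
  have hs' := sum_mul_mem_Icc (hW j) hv'
  have hσs := hlip.dist_le_mul _ hs _ hs'
  rw [NNReal.coe_one, one_mul, Real.dist_eq, Real.dist_eq] at hσs
  calc |τ (∑ i, W j i * v i) - σ (∑ i, W j i * v' i)|
      ≤ |τ (∑ i, W j i * v i) - σ (∑ i, W j i * v i)| +
        |σ (∑ i, W j i * v i) - σ (∑ i, W j i * v' i)| := abs_sub_le _ _ _
    _ ≤ δ + ‖v - v'‖ :=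
        add_le_add (hτσ _ hs) (hσs.trans (abs_sum_mul_sub_sum_mul_le (hW j) v v'))
    _ = ‖v - v'‖ + δ := add_comm _ _

include hσ hτ

lemma norm_iterLayers_sub_le {v v' : Fin m → ℝ} (hv : ‖v‖ ≤ 1) (hv' : ‖v'‖ ≤ 1) :
    ∀ {n : ℕ} {Ws : Fin n → Matrix (Fin m) (Fin m) ℝ}, (∀ p j, ∑ i, |Ws p j i| ≤ 1) →
      ‖iterLayers τ n Ws v - iterLayers σ n Ws v'‖ ≤ ‖v - v'‖ + n * δ
  | 0, _, _ => by simp [iterLayers]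
  | n + 1, Ws, hWs => by
    have hWs' : ∀ (p : Fin n) j, ∑ i, |Ws p.castSucc j i| ≤ 1 := fun p => hWs _
    have hlast := norm_applyLayer_sub_le hlip hτσ (hWs (Fin.last n))
      (norm_iterLayers_le_one hτ hv hWs') (norm_iterLayers_le_one hσ hv' hWs')
    simp only [iterLayers, Nat.cast_succ]
    linarith [norm_iterLayers_sub_le hv hv' hWs', hlast]

-- No layer expands distances, so the error `δ` enters once per layer.
lemma abs_nnFun_sub_le {a : Fin m → ℝ} {W1 : Matrix (Fin m) (Fin d) ℝ}
    {Ws : Fin n → Matrix (Fin m) (Fin m) ℝ} (hW : HasUnitWeights a W1 Ws) {x x' : Fin d → ℝ}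
    (hx : ‖x‖ ≤ 1) (hx' : ‖x'‖ ≤ 1) :
    |nnFun τ a W1 Ws x - nnFun σ a W1 Ws x'| ≤ ‖x - x'‖ + (n + 1) * δ := by
  have hfirst := norm_applyLayer_sub_le hlip hτσ hW.input hx hx'
  have hhidden := norm_iterLayers_sub_le hσ hτ hlip hτσ
    (norm_applyLayer_le_one hτ hW.input hx) (norm_applyLayer_le_one hσ hW.input hx') hW.hidden
  have hout := abs_sum_mul_sub_sum_mul_le hW.output
    (iterLayers τ n Ws (applyLayer τ W1 x)) (iterLayers σ n Ws (applyLayer σ W1 x'))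
  simp only [nnFun]
  linarith

end Perturbation

lemma lipschitzOnWith_nnFun (hσ : MapsTo σ (Icc (-1) 1) (Icc (-1) 1))
    (hlip : LipschitzOnWith 1 σ (Icc (-1) 1)) {a : Fin m → ℝ} {W1 : Matrix (Fin m) (Fin d) ℝ}
    {Ws : Fin n → Matrix (Fin m) (Fin m) ℝ} (hW : HasUnitWeights a W1 Ws) :
    LipschitzOnWith 1 (nnFun σ a W1 Ws) (closedBall 0 1) :=
  LipschitzOnWith.of_dist_le_mul fun x hx y hy => by
    simpa [dist_eq_norm] using abs_nnFun_sub_le hσ hσ hlip (δ := 0) (fun _ _ => by simp) hW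
      (mem_closedBall_zero_iff.1 hx) (mem_closedBall_zero_iff.1 hy)

lemma aemeasurable_nnFun (hσ : MapsTo σ (Icc (-1) 1) (Icc (-1) 1))
    (hlip : LipschitzOnWith 1 σ (Icc (-1) 1)) {μ : Measure (Fin d → ℝ)}
    (hμ : ∀ᵐ x ∂μ, ‖x‖ ≤ 1) {m : ℕ} {a : Fin m → ℝ} {W1 : Matrix (Fin m) (Fin d) ℝ}
    {Ws : Fin n → Matrix (Fin m) (Fin m) ℝ} (hW : HasUnitWeights a W1 Ws) :
    AEMeasurable (nnFun σ a W1 Ws) μ := by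
  rw [← Measure.restrict_eq_self_of_ae_mem (hμ.mono fun x hx => mem_closedBall_zero_iff.2 hx)]
  exact (lipschitzOnWith_nnFun hσ hlip hW).continuousOn.aemeasurable
    measurableSet_closedBall

end Networks

section PolynomialNetworks

open Module

lemma aeval_mem_pow_mul_natDegree {R A : Type*} [CommSemiring R] [CommSemiring A] [Algebra R A]
    {U : Submodule R A} (hU : 1 ≤ U) {k : ℕ} {q : A} (hq : q ∈ U ^ k) (p : R[X]) :
    aeval q p ∈ U ^ (k * p.natDegree) := by
  rw [aeval_eq_sum_range]
  refine Submodule.sum_mem _ fun i hi => Submodule.smul_mem _ _ ?_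
  have hle : U ^ (k * i) ≤ U ^ (k * p.natDegree) :=
    pow_le_pow_right' hU (Nat.mul_le_mul_left k (Finset.mem_range_succ_iff.1 hi))
  exact hle (pow_mul U k i ▸ Submodule.pow_mem_pow _ hq i)

lemma finrank_span_pow_le {R A : Type*} [CommRing R] [StrongRankCondition R] [CommRing A]
    [Algebra R A] (s : Finset A) (k : ℕ) :
    finrank R ↥(Submodule.span R (s : Set A) ^ k) ≤ s.card ^ k := by
  rw [Submodule.span_pow, ← Finset.coe_pow]
  exact (finrank_span_finset_le_card _).trans Finset.card_pow_le

variable {d m n : ℕ} {K : Set (Fin d → ℝ)}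

/-- The constant `1` and the coordinate functions on `K`. The `k`-th power of their span is the
space of polynomial functions on `K` of total degree at most `k`. -/
def oneAndCoords (K : Set (Fin d → ℝ)) : Finset C(K, ℝ) :=
  insert 1 (Finset.univ.image fun i => (ContinuousMap.eval i).restrict K)

lemma card_oneAndCoords_le (K : Set (Fin d → ℝ)) : (oneAndCoords K).card ≤ d + 1 :=
  (Finset.card_insert_le _ _).trans <| Nat.succ_le_succ <| by
    simpa using Finset.card_image_le (s := (Finset.univ : Finset (Fin d)))

lemma one_le_span_oneAndCoords : 1 ≤ Submodule.span ℝ (oneAndCoords K : Set C(K, ℝ)) :=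
  Submodule.one_le.2 (Submodule.subset_span (by simp [oneAndCoords]))

lemma exists_mem_pow_applyLayer {U : Submodule ℝ C(K, ℝ)} (hU : 1 ≤ U) (p : ℝ[X]) {k : ℕ}
    {z : K → Fin n → ℝ} (hz : ∀ i, ∃ q ∈ U ^ k, ∀ x, q x = z x i) (W : Matrix (Fin m) (Fin n) ℝ)
    (j : Fin m) :
    ∃ q ∈ U ^ (k * p.natDegree), ∀ x, q x = applyLayer (p.eval ·) W (z x) j := by
  choose q hq hqz using hz
  refine ⟨aeval (∑ i, W j i • q i) p, aeval_mem_pow_mul_natDegree hU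
    (Submodule.sum_mem _ fun i _ => Submodule.smul_mem _ _ (hq i)) p, fun x => ?_⟩
  simp [applyLayer, hqz, aeval_continuousMap_apply]

lemma exists_mem_pow_iterLayers {U : Submodule ℝ C(K, ℝ)} (hU : 1 ≤ U) (p : ℝ[X]) {k : ℕ}
    {z : K → Fin m → ℝ} (hz : ∀ i, ∃ q ∈ U ^ k, ∀ x, q x = z x i) :
    ∀ {n : ℕ} (Ws : Fin n → Matrix (Fin m) (Fin m) ℝ) (j : Fin m),
      ∃ q ∈ U ^ (k * p.natDegree ^ n), ∀ x, q x = iterLayers (p.eval ·) n Ws (z x) j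
  | 0, _, j => by simpa [iterLayers] using hz j
  | n + 1, Ws, j => by
    rw [pow_succ, ← mul_assoc]
    exact exists_mem_pow_applyLayer hU p (exists_mem_pow_iterLayers hU p hz _) (Ws (Fin.last n)) j

lemma exists_mem_span_pow_nnFun (p : ℝ[X]) (a : Fin m → ℝ) (W1 : Matrix (Fin m) (Fin d) ℝ)
    (Ws : Fin n → Matrix (Fin m) (Fin m) ℝ) :
    ∃ q ∈ Submodule.span ℝ (oneAndCoords K : Set C(K, ℝ)) ^ p.natDegree ^ (n + 1),
      ∀ x : K, q x = nnFun (p.eval ·) a W1 Ws x := by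
  have hinput : ∀ i : Fin d, ∃ q ∈ Submodule.span ℝ (oneAndCoords K : Set C(K, ℝ)) ^ 1,
      ∀ x : K, q x = x.1 i := fun i =>
    ⟨(ContinuousMap.eval i).restrict K, by
      rw [pow_one]
      exact Submodule.subset_span (by simp [oneAndCoords]), fun _ => rfl⟩
  have hfirst := exists_mem_pow_applyLayer one_le_span_oneAndCoords p hinput W1
  choose q hq hqz using exists_mem_pow_iterLayers one_le_span_oneAndCoords p hfirst Ws
  rw [one_mul, ← pow_succ'] at hq
  exact ⟨∑ j, a j • q j, Submodule.sum_mem _ fun j _ => Submodule.smul_mem _ _ (hq j),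
    fun x => by simp [nnFun, hqz]⟩

end PolynomialNetworks

section Entropy

open Metric Module Set
open scoped NNReal

variable {σ : ℝ → ℝ} {d n : ℕ}

/-- The functions computed on the unit ball of `ℓ∞` by networks of depth `n + 1`, arbitrary
width and unit weights, as a subset of `C(closedBall 0 1, ℝ)`, which carries the sup metric. -/
def unitNets (σ : ℝ → ℝ) (d n : ℕ) : Set C(closedBall (0 : Fin d → ℝ) 1, ℝ) :=
  {f | ∃ (m : ℕ) (a : Fin m → ℝ) (W1 : Matrix (Fin m) (Fin d) ℝ)
    (Ws : Fin n → Matrix (Fin m) (Fin m) ℝ),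
    HasUnitWeights a W1 Ws ∧ ∀ x, f x = nnFun σ a W1 Ws x}

lemma unitNets_subset_closedBall (hσ : MapsTo σ (Icc (-1) 1) (Icc (-1) 1)) :
    unitNets σ d n ⊆ closedBall 0 1 := by
  rintro f ⟨m, a, W1, Ws, hW, hf⟩
  refine mem_closedBall_zero_iff.2 ((ContinuousMap.norm_le _ zero_le_one).2 fun x => ?_)
  rw [hf]
  exact abs_nnFun_le_one hσ hW (mem_closedBall_zero_iff.1 x.2)

lemma lipschitzWith_of_mem_unitNets (hσ : MapsTo σ (Icc (-1) 1) (Icc (-1) 1))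
    (hlip : LipschitzOnWith 1 σ (Icc (-1) 1)) {f : C(closedBall (0 : Fin d → ℝ) 1, ℝ)}
    (hf : f ∈ unitNets σ d n) : LipschitzWith 1 f := by
  obtain ⟨m, a, W1, Ws, hW, hf⟩ := hf
  rw [show ⇑f = (closedBall 0 1).domRestrict (nnFun σ a W1 Ws) from funext hf]
  exact lipschitzOnWith_iff_restrict.1 (lipschitzOnWith_nnFun hσ hlip hW)

lemma exists_mem_unitNets (hσ : MapsTo σ (Icc (-1) 1) (Icc (-1) 1))
    (hlip : LipschitzOnWith 1 σ (Icc (-1) 1)) {m : ℕ} {a : Fin m → ℝ}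
    {W1 : Matrix (Fin m) (Fin d) ℝ} {Ws : Fin n → Matrix (Fin m) (Fin m) ℝ}
    (hW : HasUnitWeights a W1 Ws) : ∃ f ∈ unitNets σ d n, ∀ x, f x = nnFun σ a W1 Ws x :=
  ⟨⟨_, (lipschitzOnWith_nnFun hσ hlip hW).continuousOn.domRestrict⟩,
    ⟨m, a, W1, Ws, hW, fun _ => rfl⟩, fun _ => rfl⟩

lemma packingNumber_unitNets_le_of_lipschitz (hσ : MapsTo σ (Icc (-1) 1) (Icc (-1) 1))
    (hlip : LipschitzOnWith 1 σ (Icc (-1) 1)) {r s : ℝ≥0} (hr : 0 < r) (hs : 0 < s) :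
    packingNumber (s + 2 * r) (unitNets σ d n) ≤
      ⌊(1 + 2 / s : ℝ) ^ ⌊(1 + 2 / r : ℝ) ^ d⌋₊⌋₊ := by
  have hcov : coveringNumber r (univ : Set (closedBall (0 : Fin d → ℝ) 1)) ≤
      ⌊(1 + 2 / r : ℝ) ^ d⌋₊ := by
    rw [← isometry_subtype_coe.coveringNumber_image, image_univ, Subtype.range_coe]
    simpa using (coveringNumber_le_packingNumber r _).trans
      (packingNumber_closedBall_le (E := Fin d → ℝ) zero_le_one hr)
  have hF : ∀ f ∈ unitNets σ d n, LipschitzWith 1 f ∧ ‖f‖ ≤ 1 := fun f hf =>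
    ⟨lipschitzWith_of_mem_unitNets hσ hlip hf,
      mem_closedBall_zero_iff.1 (unitNets_subset_closedBall hσ hf)⟩
  simpa using packingNumber_lipschitz_le zero_le_one hs hF hcov

lemma packingNumber_unitNets_le_of_polynomial (hσ : MapsTo σ (Icc (-1) 1) (Icc (-1) 1))
    (hlip : LipschitzOnWith 1 σ (Icc (-1) 1)) {p : ℝ[X]}
    (hp : MapsTo (p.eval ·) (Icc (-1) 1) (Icc (-1) 1)) {δ s : ℝ≥0} (hs : 0 < s)
    (hpσ : ∀ x ∈ Icc (-1 : ℝ) 1, |p.eval x - σ x| ≤ δ) :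
    packingNumber (s + 2 * ((n + 1) * δ)) (unitNets σ d n) ≤
      ⌊(1 + 2 / s : ℝ) ^ (d + 1) ^ p.natDegree ^ (n + 1)⌋₊ := by
  set K := closedBall (0 : Fin d → ℝ) 1
  set V := Submodule.span ℝ (oneAndCoords K : Set C(K, ℝ)) ^ p.natDegree ^ (n + 1)
  have : FiniteDimensional ℝ V :=
    Module.Finite.iff_fg.2 ((Submodule.fg_span (oneAndCoords K).finite_toSet).pow _)
  have hnear : ∀ f ∈ unitNets σ d n, ∃ q ∈ V, ‖q‖ ≤ 1 ∧ ‖f - q‖ ≤ ((n + 1) * δ : ℝ≥0) := by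
    rintro f ⟨m, a, W1, Ws, hW, hf⟩
    obtain ⟨q, hqV, hq⟩ := exists_mem_span_pow_nnFun (K := K) p a W1 Ws
    refine ⟨q, hqV, (ContinuousMap.norm_le _ zero_le_one).2 fun x => ?_,
      (ContinuousMap.norm_le _ NNReal.zero_le_coe).2 fun x => ?_⟩
    · rw [hq]
      exact abs_nnFun_le_one hp hW (mem_closedBall_zero_iff.1 x.2)
    · rw [ContinuousMap.sub_apply, hf, hq, Real.norm_eq_abs, abs_sub_comm]
      simpa using abs_nnFun_sub_le hσ hp hlip hpσ hW (mem_closedBall_zero_iff.1 x.2)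
        (mem_closedBall_zero_iff.1 x.2)
  have hdim : finrank ℝ V ≤ (d + 1) ^ p.natDegree ^ (n + 1) :=
    (finrank_span_pow_le _ _).trans (Nat.pow_le_pow_left (card_oneAndCoords_le K) _)
  calc packingNumber (s + 2 * ((n + 1) * δ)) (unitNets σ d n)
      ≤ ⌊(1 + 2 / s : ℝ) ^ finrank ℝ V⌋₊ := by
        simpa using packingNumber_le_of_near_submodule V zero_le_one hs hnear
    _ ≤ _ := by
        gcongr
        exact le_add_of_nonneg_right (by positivity)

lemma AdmissibleActivation.mapsTo (hσ : AdmissibleActivation σ) :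
    MapsTo σ (Icc (-1) 1) (Icc (-1) 1) := fun x hx => abs_le.1 (hσ.2.2.2 x hx)

lemma succ_pow_le_exp_two_mul_log (hd : d ≠ 1) (M : ℕ) :
    ((d + 1 : ℕ) : ℝ) ^ M ≤ Real.exp (2 * Real.log d * M) := by
  obtain rfl | hd0 := Nat.eq_zero_or_pos d
  · simp
  have hsq : d + 1 ≤ d ^ 2 := by nlinarith [show 2 ≤ d by omega]
  have hd' : (0 : ℝ) < d := by exact_mod_cast hd0
  calc ((d + 1 : ℕ) : ℝ) ^ M ≤ ((d : ℝ) ^ 2) ^ M := by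
        gcongr
        exact_mod_cast hsq
    _ = Real.exp ((2 * M : ℕ) * Real.log d) := by
        rw [Real.exp_nat_mul, Real.exp_log hd', pow_mul]
    _ = Real.exp (2 * Real.log d * M) := by
        push_cast
        ring_nf

lemma one_add_pow_le_exp {x : ℝ} (hx : 0 ≤ x) (k : ℕ) : (1 + x) ^ k ≤ Real.exp (x * k) := by
  rw [mul_comm, Real.exp_nat_mul, add_comm]
  exact pow_le_pow_left₀ (by positivity) (Real.add_one_le_exp x) k

lemma packingNumber_unitNets_one_le_exp (hσ : MapsTo σ (Icc (-1) 1) (Icc (-1) 1))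
    (hlip : LipschitzOnWith 1 σ (Icc (-1) 1)) {e : ℝ≥0} (he : 0 < e) (he2 : e ≤ 2) :
    packingNumber (2 / 3 * e) (unitNets σ 1 n) ≤ ⌊Real.exp (84 / (e : ℝ) ^ 2)⌋₊ := by
  have he' : (0 : ℝ) < e := he
  have hradius : 2 / 3 * e = e / 3 + 2 * (e / 6) := by
    rw [← NNReal.coe_inj]; push_cast; ring
  have hpoints : (⌊(1 + 2 / (e / 6 : ℝ≥0) : ℝ) ^ 1⌋₊ : ℝ) ≤ 14 / e := by
    refine (Nat.floor_le (by positivity)).trans ?_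
    push_cast
    rw [pow_one, le_div_iff₀ he', add_mul]
    field_simp
    linarith [show (e : ℝ) ≤ 2 from he2]
  rw [hradius]
  refine (packingNumber_unitNets_le_of_lipschitz hσ hlip (by positivity) (by positivity)).trans
    (Nat.cast_le.2 (Nat.floor_le_floor ?_))
  refine (one_add_pow_le_exp (by positivity) _).trans (Real.exp_le_exp.2 ?_)
  calc 2 / ((e / 3 : ℝ≥0) : ℝ) * (⌊(1 + 2 / (e / 6 : ℝ≥0) : ℝ) ^ 1⌋₊ : ℝ)
      ≤ 2 / ((e / 3 : ℝ≥0) : ℝ) * (14 / e) := by gcongr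
    _ = 84 / (e : ℝ) ^ 2 := by push_cast; field_simp; norm_num

lemma packingNumber_unitNets_le_exp_of_ne_one (hσ : AdmissibleActivation σ) (hd : d ≠ 1) (n : ℕ)
    {e : ℝ≥0} (he : 0 < e) (he2 : e ≤ 2) :
    packingNumber (2 / 3 * e) (unitNets σ d n) ≤ ⌊Real.exp (84 / (e : ℝ) ^ 2 *
      Real.exp (2 * Real.log d * (approxOrder σ (e / (4 * (n + 1))) ^ (n + 1) : ℕ)))⌋₊ := by
  have : (0 : ℝ) < e := he
  obtain ⟨p, hdeg, hpσ, hp01⟩ := hσ.2.1 (e / (4 * (n + 1))) (by positivity)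
  have hp : MapsTo (p.eval ·) (Icc (-1) 1) (Icc (-1) 1) := fun x hx =>
    Icc_subset_Icc (by norm_num) le_rfl (hp01 x hx)
  have hradius : 2 / 3 * e = e / 6 + 2 * ((n + 1) * (e / (4 * (n + 1)))) := by
    rw [← NNReal.coe_inj]; push_cast; field_simp; norm_num
  have hcoef : 2 / ((e / 6 : ℝ≥0) : ℝ) ≤ 84 / (e : ℝ) ^ 2 := by
    push_cast
    rw [div_le_div_iff₀ (by positivity) (by positivity)]
    nlinarith [show (e : ℝ) ≤ 2 from he2]
  rw [hradius, ← hdeg]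
  refine (packingNumber_unitNets_le_of_polynomial hσ.mapsTo hσ.2.2.1 hp (by positivity)
    (by exact_mod_cast hpσ)).trans (Nat.cast_le.2 (Nat.floor_le_floor ?_))
  refine (one_add_pow_le_exp (by positivity) _).trans (Real.exp_le_exp.2 ?_)
  rw [Nat.cast_pow (d + 1)]
  exact mul_le_mul hcoef (succ_pow_le_exp_two_mul_log hd _) (by positivity) (by positivity)

-- For `d = 1` the factor `exp (2 * log d * M)` is `1`, less than the dimension of the polynomials
-- of degree `M`; there the Lipschitz bound takes over.
theorem packingNumber_unitNets_le_exp (hσ : AdmissibleActivation σ) (d n : ℕ) {e : ℝ≥0}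
    (he : 0 < e) (he2 : e ≤ 2) :
    packingNumber (2 / 3 * e) (unitNets σ d n) ≤ ⌊Real.exp (84 / (e : ℝ) ^ 2 *
      Real.exp (2 * Real.log d * (approxOrder σ (e / (4 * (n + 1))) ^ (n + 1) : ℕ)))⌋₊ := by
  obtain rfl | hd := eq_or_ne d 1
  · simpa using packingNumber_unitNets_one_le_exp hσ.mapsTo hσ.2.2.1 he he2
  · exact packingNumber_unitNets_le_exp_of_ne_one hσ hd n he he2

end Entropy

section HankelDeterminants

open Set

variable {P : Measure ℝ}

lemma eq_zero_of_mem_measSupport {f : ℝ → ℝ} (hf : Continuous f) (h : f =ᵐ[P] 0) {x : ℝ}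
    (hx : x ∈ measSupport P) : f x = 0 := by
  by_contra hne
  exact hx _ ((isOpen_ne_fun hf continuous_const).mem_nhds hne) (ae_iff.1 h)

lemma eq_zero_of_ae_eval_eq_zero {q : ℝ[X]} (h : ∀ᵐ x ∂P, q.eval x = 0)
    (hq : q.natDegree < (measSupport P).encard) : q = 0 := by
  by_contra hne
  have hroots : measSupport P ⊆ q.roots.toFinset := fun x hx => by
    simpa [hne] using eq_zero_of_mem_measSupport q.continuous h hx
  refine hq.not_ge ((encard_le_encard hroots).trans ?_)
  rw [encard_coe_eq_coe_finsetCard]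
  exact_mod_cast (Multiset.toFinset_card_le _).trans q.card_roots'

lemma dotProduct_hankel_mulVec (hP : ∀ k : ℕ, Integrable (fun x => x ^ k) P) {n : ℕ}
    (v : Fin n → ℝ) :
    v ⬝ᵥ (Matrix.of fun i j : Fin n => momentP P (i + j)) *ᵥ v =
      ∫ x, (ofFn n v).eval x ^ 2 ∂P := by
  have hsq (x : ℝ) : (ofFn n v).eval x ^ 2 = ∑ i, ∑ j, v i * v j * x ^ (i + j : ℕ) := by
    simp only [ofFn_eq_sum_monomial, eval_finsetSum, eval_monomial, sq, Finset.sum_mul_sum,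
      pow_add]
    exact Finset.sum_congr rfl fun i _ => Finset.sum_congr rfl fun j _ => by ring
  simp_rw [hsq]
  rw [integral_finsetSum _ fun i _ => integrable_finsetSum _ fun j _ => (hP _).const_mul _]
  refine Finset.sum_congr rfl fun i _ => ?_
  rw [integral_finsetSum _ fun j _ => (hP _).const_mul _, mulVec, dotProduct, Finset.mul_sum]
  refine Finset.sum_congr rfl fun j _ => ?_
  rw [integral_const_mul, of_apply, momentP]
  ring

lemma posDef_hankel (hP : ∀ k : ℕ, Integrable (fun x => x ^ k) P) {n : ℕ}
    (hn : n < (measSupport P).encard) :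
    (Matrix.of fun i j : Fin (n + 1) => momentP P (i + j)).PosDef := by
  refine PosDef.of_dotProduct_mulVec_pos (by ext i j; simp [add_comm]) fun v hv => ?_
  have hint : Integrable (fun x => (ofFn (n + 1) v).eval x ^ 2) P := by
    simp_rw [← eval_pow, eval_eq_sum, Polynomial.sum]
    exact integrable_finsetSum _ fun k _ => (hP k).const_mul _
  rw [star_trivial, dotProduct_hankel_mulVec hP]
  refine (integral_nonneg fun x => sq_nonneg _).lt_of_ne' fun hzero => hv ?_
  have hae := (integral_eq_zero_iff_of_nonneg (fun x => sq_nonneg _) hint).1 hzero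
  have hdeg : (ofFn (n + 1) v).natDegree < (measSupport P).encard :=
    (Nat.cast_le.2 (Nat.lt_succ_iff.1 (ofFn_natDegree_lt n.succ_pos v))).trans_lt hn
  refine injective_ofFn (n + 1) ?_
  rw [eq_zero_of_ae_eval_eq_zero (hae.mono fun x hx => by simpa using hx) hdeg, map_zero]

lemma lt_encard_measSupport_of_le_omegaP {i k : ℕ} (hi : 1 ≤ i) (hik : i ≤ omegaP P k) :
    i < (measSupport P).encard := by
  by_cases hfin : (measSupport P).Finite
  · rw [omegaP, if_pos hfin] at hik
    rw [← hfin.cast_ncard_eq, Nat.cast_lt]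
    omega
  · rw [Set.Infinite.encard_eq hfin]
    exact ENat.natCast_lt_top i

lemma Dn_div_Dn_pos (hP : ∀ k : ℕ, Integrable (fun x => x ^ k) P) {i k : ℕ}
    (hi : i ∈ Icc 1 (omegaP P k)) : 0 < Dn P i / Dn P (i - 1) := by
  have hsupp := lt_encard_measSupport_of_le_omegaP hi.1 hi.2
  exact div_pos (posDef_hankel hP hsupp).det_pos
    (posDef_hankel hP ((Nat.cast_le.2 (Nat.sub_le i 1)).trans_lt hsupp)).det_pos

lemma csInf_insert_one_image_mem_Ioc {ι : Type*} {s : Set ι} (hs : s.Finite) {g : ι → ℝ}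
    (hg : ∀ i ∈ s, 0 < g i) : sInf (insert 1 (g '' s)) ∈ Ioc 0 1 := by
  have hfin : (insert (1 : ℝ) (g '' s)).Finite := (hs.image g).insert 1
  refine ⟨?_, csInf_le hfin.bddBelow (mem_insert _ _)⟩
  obtain hone | ⟨i, hi, hgi⟩ := (insert_nonempty 1 (g '' s)).csInf_mem hfin
  · exact one_pos.trans_eq hone.symm
  · exact (hg i hi).trans_eq hgi

lemma one_le_CPk (hP : ∀ k : ℕ, Integrable (fun x => x ^ k) P) (k : ℕ) : 1 ≤ CPk P k := by
  have hfin := finite_Icc 1 (omegaP P k)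
  have hc : cPk P k ∈ Ioc 0 1 := csInf_insert_one_image_mem_Ioc hfin fun i hi =>
    Real.rpow_pos_of_pos (Dn_div_Dn_pos hP hi) _
  have hmin : ratioMinK P k ∈ Ioc 0 1 := csInf_insert_one_image_mem_Ioc hfin fun i hi =>
    pow_pos (Dn_div_Dn_pos hP hi) k
  have hmax : 1 ≤ ratioMaxK P k :=
    le_csSup ((hfin.image _).insert 1).bddAbove (mem_insert _ _)
  have hf : 1 ≤ fPk P k := (one_le_div₀ hmin.1).2 <|
    hmin.2.trans (one_le_mul_of_one_le_of_one_le (le_max_right _ _) hmax)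
  exact (one_le_div₀ hc.1).2 (hc.2.trans hf)

lemma AdmissibleDist.ae_abs_le_one (hP : AdmissibleDist P) : ∀ᵐ x ∂P, |x| ≤ 1 := by
  have := hP.1
  filter_upwards [(mem_ae_iff_prob_eq_one measurableSet_Icc).2 hP.2.1] with x hx
  exact abs_le.2 hx

lemma AdmissibleDist.integrable_pow (hP : AdmissibleDist P) (k : ℕ) :
    Integrable (fun x => x ^ k) P := by
  have := hP.1
  refine Integrable.of_bound (by fun_prop) 1 (hP.ae_abs_le_one.mono fun x hx => ?_)
  simpa using pow_le_one₀ (abs_nonneg x) hx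

lemma AdmissibleDist.ae_norm_le_one (hP : AdmissibleDist P) (d : ℕ) :
    ∀ᵐ x ∂piP P d, ‖x‖ ≤ 1 := by
  have := hP.1
  simp only [pi_norm_le_iff_of_nonneg zero_le_one, ae_all_iff]
  exact fun j => (Measure.tendsto_eval_ae_ae (μ := fun _ : Fin d => P)).eventually
    hP.ae_abs_le_one

end HankelDeterminants

section Generalization

open Metric Set
open scoped NNReal

lemma rpow_one_fourth_le_mul_of_sample_size {N ε : ℝ} (hε : 0 < ε) (hε4 : ε ≤ 4)
    (hN : 2 ^ 24 * ε ^ (-6 : ℤ) ≤ N) : N ^ ((1 : ℝ) / 4) ≤ N * (ε / 16) := by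
  have hN0 : 0 ≤ N := le_trans (by positivity) hN
  obtain ⟨y, hy0, rfl, hy⟩ : ∃ y : ℝ, 0 ≤ y ∧ y ^ 4 = N ∧ N ^ ((1 : ℝ) / 4) = y := by
    refine ⟨_, Real.rpow_nonneg hN0 ((1 : ℝ) / 4), ?_, rfl⟩
    rw [← Real.rpow_mul_natCast hN0]
    norm_num
  have hroot : 2 ^ 12 ≤ y ^ 2 * ε ^ 3 := by
    rw [_root_.zpow_neg, ← div_eq_mul_inv, div_le_iff₀ (by positivity)] at hN
    refine (pow_le_pow_iff_left₀ (by positivity) (by positivity) two_ne_zero).1 ?_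
    calc ((2 : ℝ) ^ 12) ^ 2 = 2 ^ 24 := by norm_num
      _ ≤ y ^ 4 * ε ^ (6 : ℤ) := hN
      _ = (y ^ 2 * ε ^ 3) ^ 2 := by norm_cast; ring
  have hsq : 2 ^ 8 ≤ y ^ 2 * ε := by
    have hε2 : ε ^ 2 ≤ 4 ^ 2 := by gcongr
    nlinarith [mul_le_mul_of_nonneg_left hε2 (show 0 ≤ y ^ 2 * ε by positivity)]
  have hy8 : 1 ≤ y := by nlinarith
  rw [hy]
  nlinarith [mul_le_mul_of_nonneg_left hsq hy0]

lemma exponent_le_of_sample_size {N ε T : ℝ} (hε : 0 < ε) (hε4 : ε ≤ 4) (hT : 1 ≤ T)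
    (hN : 2 ^ 24 * ε ^ (-6 : ℤ) * T ^ 96 ≤ N) :
    84 / ε * T ^ 2 - N * (ε / 8) ≤ -N ^ ((1 : ℝ) / 4) := by
  have hN_one : 2 ^ 24 * ε ^ (-6 : ℤ) ≤ N :=
    (le_mul_of_one_le_right (by positivity) (one_le_pow₀ hT)).trans hN
  have hentropy : 84 / ε * T ^ 2 ≤ N * (ε / 16) := by
    have hε4' : ε ^ 4 ≤ 4 ^ 4 := by gcongr
    calc 84 / ε * T ^ 2 ≤ 84 / ε * T ^ 96 := by gcongr; norm_num
      _ ≤ 2 ^ 20 / ε ^ 4 / ε * T ^ 96 := by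
          gcongr
          rw [le_div_iff₀ (by positivity)]
          linarith
      _ = 2 ^ 24 * ε ^ (-6 : ℤ) * T ^ 96 * (ε / 16) := by
          rw [_root_.zpow_neg]
          norm_cast
          field_simp
          norm_num
      _ ≤ N * (ε / 16) := by gcongr
  linarith [rpow_one_fourth_le_mul_of_sample_size hε hε4 hN_one]

variable {σ : ℝ → ℝ} {d n N : ℕ} {ε : ℝ}

theorem measure_pi_unitNets_interpolant_le (hσ : AdmissibleActivation σ)
    (μ : Measure (closedBall (0 : Fin d → ℝ) 1)) [IsProbabilityMeasure μ]
    {g : closedBall (0 : Fin d → ℝ) 1 → ℝ} (hg : AEMeasurable g μ) (hg1 : ∀ᵐ x ∂μ, |g x| ≤ 1)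
    (hε : 0 < ε) (hε4 : ε ≤ 4)
    (hN : 2 ^ 24 * ε ^ (-6 : ℤ) * Real.exp (96 * Real.log d *
      (approxOrder σ (√(ε / (16 * ((n + 1 : ℕ) : ℝ) ^ 2))) ^ (n + 1) : ℕ)) ≤ N) :
    Measure.pi (fun _ : Fin N => μ) {X | ∃ f ∈ unitNets σ d n, (∀ i, f (X i) = g (X i)) ∧
      ε < ∫ x, (g x - f x) ^ 2 ∂μ} ≤ ENNReal.ofReal (Real.exp (-(N : ℝ) ^ ((1 : ℝ) / 4))) := by
  obtain ⟨e, he, rfl⟩ : ∃ e : ℝ≥0, 0 < e ∧ (e : ℝ) ^ 2 = ε :=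
    ⟨⟨√ε, Real.sqrt_nonneg ε⟩, Real.sqrt_pos.2 hε, Real.sq_sqrt hε.le⟩
  have he2 : e ≤ 2 := by
    rw [← NNReal.coe_le_coe, NNReal.coe_ofNat]
    nlinarith [e.coe_nonneg]
  have hradius : √((e : ℝ) ^ 2 / (16 * ((n + 1 : ℕ) : ℝ) ^ 2)) = e / (4 * (n + 1)) := by
    have h16 : (16 : ℝ) * ((n + 1 : ℕ) : ℝ) ^ 2 = (4 * (n + 1)) ^ 2 := by push_cast; ring
    rw [h16, ← div_pow, Real.sqrt_sq (by positivity)]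
  rw [hradius] at hN
  have hpack := packingNumber_unitNets_le_exp hσ d n he he2
  generalize approxOrder σ (e / (4 * (n + 1))) ^ (n + 1) = M at hN hpack
  have hexp (k : ℕ) : Real.exp (k * Real.log d * M) = Real.exp (Real.log d * M) ^ k := by
    rw [mul_assoc, Real.exp_nat_mul]
  have hexponent := exponent_le_of_sample_size (N := N) hε hε4 (T := Real.exp (Real.log d * M))
    (Real.one_le_exp (by positivity)) (by rw [← hexp]; exact_mod_cast hN)
  rw [← hexp, Nat.cast_ofNat] at hexponent
  have hρ : 2 * ((2 / 3 * e : ℝ≥0) : ℝ) ^ 2 ≤ (e : ℝ) ^ 2 := by push_cast; nlinarith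
  refine (measure_pi_exists_interpolant_le μ (unitNets_subset_closedBall hσ.mapsTo)
    hg hg1 hρ hpack).trans ?_
  rw [← ENNReal.ofReal_natCast, ← ENNReal.ofReal_mul (by positivity), Fintype.card_fin]
  refine ENNReal.ofReal_le_ofReal ?_
  set H := 84 / (e : ℝ) ^ 2 * Real.exp (2 * Real.log d * M)
  calc (⌊Real.exp H⌋₊ : ℝ) * Real.exp (-(N * ((e : ℝ) ^ 2 / 8)))
      ≤ Real.exp H * Real.exp (-(N * ((e : ℝ) ^ 2 / 8))) := by
        gcongr; exact Nat.floor_le (Real.exp_pos H).le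
    _ = Real.exp (H - N * ((e : ℝ) ^ 2 / 8)) := by rw [← Real.exp_add, ← sub_eq_add_neg]
    _ ≤ Real.exp (-(N : ℝ) ^ ((1 : ℝ) / 4)) := Real.exp_le_exp.2 hexponent

theorem overparametrized_generalization_general (hσ : AdmissibleActivation σ)
    (μ : Measure (Fin d → ℝ)) [IsProbabilityMeasure μ] (hμ : ∀ᵐ x ∂μ, ‖x‖ ≤ 1)
    {g : (Fin d → ℝ) → ℝ} (hg : AEMeasurable g μ) (hg1 : ∀ᵐ x ∂μ, |g x| ≤ 1)
    {ε : ℝ} (hε : 0 < ε)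
    (hN : 2 ^ 24 * ε ^ (-6 : ℤ) * Real.exp (96 * Real.log d *
      (approxOrder σ (√(ε / (16 * ((n + 1 : ℕ) : ℝ) ^ 2))) ^ (n + 1) : ℕ)) ≤ N) :
    ENNReal.ofReal (1 - Real.exp (-(N : ℝ) ^ ((1 : ℝ) / 4))) ≤
      Measure.pi (fun _ : Fin N => μ) {X | ∀ (m : ℕ) (a : Fin m → ℝ)
        (W1 : Matrix (Fin m) (Fin d) ℝ) (Ws : Fin n → Matrix (Fin m) (Fin m) ℝ),
        HasUnitWeights a W1 Ws → (∀ i, nnFun σ a W1 Ws (X i) = g (X i)) →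
        ∫ x, (g x - nnFun σ a W1 Ws x) ^ 2 ∂μ ≤ ε} := by
  obtain hε4 | hε4 := le_total 4 ε
  · refine (ENNReal.ofReal_le_one.2 (sub_le_self _ (Real.exp_pos _).le)).trans ?_
    rw [← measure_univ (μ := Measure.pi fun _ : Fin N => μ)]
    refine measure_mono fun X _ m a W1 Ws hW _ => (integral_sq_sub_le_four hg1 ?_).trans hε4
    exact hμ.mono fun x hx => abs_nnFun_le_one hσ.mapsTo hW hx
  obtain ⟨ν, hν, rfl⟩ := exists_map_subtype_val_eq (s := closedBall (0 : Fin d → ℝ) 1)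
    measurableSet_closedBall (hμ.mono fun x hx => mem_closedBall_zero_iff.2 hx)
  have hval := MeasurableEmbedding.subtype_coe
    (measurableSet_closedBall (x := (0 : Fin d → ℝ)) (ε := 1))
  refine le_trans ?_ (measure_pi_preimage_comp_le hval.measurable _)
  refine ofReal_one_sub_le_measure_of_compl_le (Real.exp_pos _).le ((measure_mono ?_).trans
    (measure_pi_unitNets_interpolant_le hσ ν (hg.comp_measurable hval.measurable)
      (hval.ae_map_iff.1 hg1) hε hε4 hN))
  intro X hX
  simp only [mem_compl_iff, mem_ofPred_eq, not_forall, not_le] at hX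
  obtain ⟨m, a, W1, Ws, hW, hfit, hε⟩ := hX
  obtain ⟨f, hf, hfW⟩ := exists_mem_unitNets hσ.mapsTo hσ.2.2.1 hW
  rw [hval.integral_map] at hε
  exact ⟨f, hf, fun i => (hfW _).trans (hfit i), by simpa [hfW] using hε⟩

end Generalization

/-- Admissible activation, teacher/student with unit `ℓ1`-bounded weights:
any interpolating student of width `m̂ ≥ m*` generalizes to within `ε` of the teacher,
with probability at least `1 − exp(−c N^{1/4})`, provided
`N ≥ 2^{24} ε^{−6} exp(96 log(d) M) C(P,M)^{18}` with `M = φ_σ(√(ε/16L²))^L`. -/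
theorem overparametrized_generalization :
    ∃ c > (0 : ℝ), ∀ (P : Measure ℝ), AdmissibleDist P →
      ∀ (σ : ℝ → ℝ), AdmissibleActivation σ →
      ∀ (d m L N : ℕ), 1 ≤ L →
      ∀ (ε : ℝ), 0 < ε →
      ∀ (a : Fin m → ℝ) (W1 : Matrix (Fin m) (Fin d) ℝ)
        (Ws : Fin (L - 1) → Matrix (Fin m) (Fin m) ℝ),
      (∑ j, |a j| ≤ 1) →
      (∀ j, ∑ i, |W1 j i| ≤ 1) →
      (∀ p j, ∑ i, |Ws p j i| ≤ 1) →
      ∀ M : ℕ, M = approxOrder σ (Real.sqrt (ε / (16 * (L : ℝ) ^ 2))) ^ L →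
      (N : ℝ) ≥ 2 ^ 24 * ε ^ (-(6 : ℤ)) * Real.exp (96 * Real.log d * M) * CPk P M ^ 18 →
      samples P d N
        {X | ∀ (mh : ℕ), m ≤ mh →
          ∀ (ah : Fin mh → ℝ) (V1 : Matrix (Fin mh) (Fin d) ℝ)
            (Vs : Fin (L - 1) → Matrix (Fin mh) (Fin mh) ℝ),
          (∑ j, |ah j| ≤ 1) →
          (∀ j, ∑ i, |V1 j i| ≤ 1) →
          (∀ p j, ∑ i, |Vs p j i| ≤ 1) →
          (∀ i : Fin N, nnFun σ ah V1 Vs (X i) = nnFun σ a W1 Ws (X i)) →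
          ∫ x, (nnFun σ a W1 Ws x - nnFun σ ah V1 Vs x) ^ 2 ∂(piP P d) ≤ ε}
        ≥ ENNReal.ofReal (1 - Real.exp (-c * (N : ℝ) ^ ((1 : ℝ) / 4))) := by
  refine ⟨1, one_pos, fun P hP σ hσ d m L N hL ε hε a W1 Ws ha hW1 hWs M hM hN => ?_⟩
  obtain ⟨n, rfl⟩ := Nat.exists_eq_add_of_le' hL
  have hW : HasUnitWeights a W1 Ws := ⟨ha, hW1, hWs⟩
  have := hP.1
  have : IsProbabilityMeasure (piP P d) := by unfold piP; infer_instance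
  have hball := hP.ae_norm_le_one d
  have hteacher : ∀ᵐ x ∂piP P d, |nnFun σ a W1 Ws x| ≤ 1 :=
    hball.mono fun x hx => abs_nnFun_le_one hσ.mapsTo hW hx
  have hN' : 2 ^ 24 * ε ^ (-(6 : ℤ)) * Real.exp (96 * Real.log d * M) ≤ N :=
    (le_mul_of_one_le_right (by positivity)
      (one_le_pow₀ (one_le_CPk hP.integrable_pow M))).trans hN
  subst hM
  rw [neg_one_mul]
  refine (overparametrized_generalization_general hσ _ hball
    (aemeasurable_nnFun hσ.mapsTo hσ.2.2.1 hball hW) hteacher hε hN').trans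
      (measure_mono fun X hX mh _ ah V1 Vs hah hV1 hVs => ?_)
  exact hX mh ah V1 Vs ⟨hah, hV1, hVs⟩

end
end
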